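/- arXiv:1410.7910 — 2 statements merged into one kernel-verified Lean document; each statement's English description precedes it below -/
import Mathlib

section
/- Let I_N denote the number of isomorphism classes of cubic multigraphs on N vertices. Then I_N ∼ (e²/√(πN))·(3N/(4e))^{N/2} as N → ∞ along even N; that is, I_N·√(πN)·(4e/(3N))^{N/2}·e^{-2} → 1 as N → ∞ through even values of N. (For odd N no cubic multigraph exists, since the degree sum 3N must be even.) -/
open Filter Real Topology

/-- A cubic multigraph on `Fin N`: a symmetric multiplicity function, where `m u u`
counts loops at `u` (each contributing 2 to the degree) and `m u v` (for `u ≠ v`)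
counts edges between `u` and `v`, such that every vertex has degree 3. -/
def IsCubic {N : ℕ} (m : Fin N → Fin N → ℕ) : Prop :=
  (∀ u v, m u v = m v u) ∧ ∀ u, 2 * m u u + ∑ v ∈ Finset.univ.erase u, m u v = 3

/-- Isomorphism of cubic multigraphs: a relabelling of the vertices carrying one
multiplicity function to the other. -/
def CubicIsoRel (N : ℕ) (m m' : {f : Fin N → Fin N → ℕ // IsCubic f}) : Prop :=
  ∃ σ : Equiv.Perm (Fin N), ∀ u v, m'.val (σ u) (σ v) = m.val u v

/-- `I N`: the number of isomorphism classes of cubic multigraphs on `N` vertices. -/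
noncomputable def I (N : ℕ) : ℕ := Nat.card (Quot (CubicIsoRel N))

/-!
Cut every edge of a cubic multigraph in two: the multigraph becomes a perfect matching of the
half-edges `Fin N × Fin 3`, and isomorphism classes become orbits of matchings under the wreath
product `S₃ ≀ S_N`, which consists of the maps `(v, i) ↦ (σ v, τ v i)`. By Burnside's lemma,
`I N * 6 ^ N * N !` is the sum over `(σ, τ)` of the number of matchings commuting with this map.

The sum is dominated by the elements with `σ = 1` and every `τ v` trivial or a transposition. When
`a` of the `τ v` are transpositions, an invariant matching consists of an arbitrary matching of the
`3N - 2a` fixed points and one of the `2a` moved points that commutes with the `a` flips. Relative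
to the number of all matchings, these elements contribute at most
`12 ^ a * flipInvariantCount a / a !`, and `flipInvariantCount a / a !` in the limit. The
exponential generating function of `flipInvariantCount` is `exp (z² + z)`, so dominated convergence
gives the total `exp 2`.

Grouping the other elements by the number `s` of points moved by `σ`, the number `j` of nontrivial
cycles of `σ`, and the numbers `a`, `b` of transpositions and `3`-cycles among the `τ v` at fixed
points `v` of `σ` shows that they contribute only `O(N^(-1/4))` relative to the number of all
matchings. Stirling's formula for that number, `(3N)! / (2 ^ (3N/2) * (3N/2)!)`, gives the
asymptotics.
-/

namespace CubicMultigraph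

open Equiv Finset Function
open scoped Nat

section Matchings

variable {X Y V Z : Type*}

theorem exists_equiv_of_card_fiber_eq [Finite X] [Finite Y] {p : X → Z} {q : Y → Z}
    (h : ∀ z, Nat.card {x // p x = z} = Nat.card {y // q y = z}) :
    ∃ e : X ≃ Y, ∀ x, q (e x) = p x := by
  have e (z : Z) : {x // p x = z} ≃ {y // q y = z} := (Finite.card_eq.mp (h z)).some
  exact ⟨(sigmaFiberEquiv p).symm.trans ((sigmaCongrRight e).trans (sigmaFiberEquiv q)),
    fun x => (e (p x) ⟨x, rfl⟩).2⟩

/-- A perfect matching of the set `X`, encoded as the fixed-point-free involution that exchanges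
the two ends of every edge. -/
def IsPerfectMatching (f : Perm X) : Prop :=
  Involutive f ∧ ∀ x, f x ≠ x

/-- The type of perfect matchings of `X`. -/
abbrev PerfectMatching (X : Type*) : Type _ :=
  {f : Perm X // IsPerfectMatching f}

theorem permCongr_eq_iff {e : X ≃ Y} {f : Perm X} {f' : Perm Y} :
    e.permCongr f = f' ↔ ∀ x, e (f x) = f' (e x) := by
  rw [Equiv.ext_iff, ← e.forall_congr_right]
  simp only [permCongr_apply, symm_apply_apply]

theorem isPerfectMatching_permCongr {e : X ≃ Y} {f : Perm X} :
    IsPerfectMatching (e.permCongr f) ↔ IsPerfectMatching f := by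
  simp only [IsPerfectMatching, Involutive, permCongr_apply, symm_apply_apply,
    e.symm.forall_congr_left, symm_symm, Ne, e.apply_eq_iff_eq]

/-- The matching of `X × Bool` that exchanges the two points over each element of `X`. -/
def boolFlip (X : Type*) : Perm (X × Bool) :=
  (Equiv.refl X).prodCongr boolNot

theorem isPerfectMatching_boolFlip : IsPerfectMatching (boolFlip X) :=
  ⟨fun x => Prod.ext rfl (Bool.not_not x.2), fun x h => Bool.not_ne_self x.2 (congrArg Prod.snd h)⟩

/-- Half of the darts of a perfect matching: a set containing exactly one end of every edge. -/
def IsHalf (f : Perm X) (T : Set X) : Prop :=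
  ∀ x, f x ∈ T ↔ x ∉ T

/-- The number of darts from `u` to `v` when the half-edge `x` is attached to the vertex `p x` and
`f` exchanges the two halves of each edge; an edge joining `u ≠ v` counts once, a loop twice. -/
noncomputable def dartCount (p : X → V) (f : Perm X) (u v : V) : ℕ :=
  Nat.card {x // p x = u ∧ p (f x) = v}

theorem IsPerfectMatching.exists_isHalf_le [Finite X] [LinearOrder V] {f : Perm X}
    (hf : IsPerfectMatching f) (p : X → V) :
    ∃ T, IsHalf f T ∧ ∀ x ∈ T, p x ≤ p (f x) := by
  let key (x : X) : V ×ₗ Fin (Nat.card X) := toLex (p x, Finite.equivFin X x)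
  have key_ne (x : X) : key (f x) ≠ key x := fun h =>
    hf.2 x ((Finite.equivFin X).injective (congrArg (fun k => (ofLex k).2) h))
  refine ⟨{x | key x < key (f x)}, fun x => ?_,
    fun x hx => Prod.Lex.monotone_fst (key x) (key (f x)) hx.le⟩
  simp only [Set.mem_ofPred_eq, hf.1 x, not_lt]
  exact (key_ne x).le_iff_lt.symm

/-- A half of the darts, together with a bit choosing an end, enumerates all the darts. -/
noncomputable def IsHalf.prodBoolEquiv {f : Perm X} (hf : IsPerfectMatching f) {T : Set X}
    (hT : IsHalf f T) : T × Bool ≃ X :=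
  Equiv.ofBijective (fun t => bif t.2 then f t.1 else t.1) <| by
    have not_mem (t : T) : f t ∉ T := fun h => (hT t).mp h t.2
    constructor
    · rintro ⟨s, _ | _⟩ ⟨t, _ | _⟩ h
      · exact congrArg (·, false) (Subtype.ext h)
      · exact absurd s.2 ((show (s : X) = f t from h) ▸ not_mem t)
      · exact absurd t.2 ((show f s = (t : X) from h) ▸ not_mem s)
      · exact congrArg (·, true) (Subtype.ext (f.injective h))
    · intro x
      by_cases hx : x ∈ T
      · exact ⟨(⟨x, hx⟩, false), rfl⟩
      · exact ⟨(⟨f x, (hT x).mpr hx⟩, true), hf.1 x⟩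

theorem IsHalf.prodBoolEquiv_not {f : Perm X} (hf : IsPerfectMatching f) {T : Set X}
    (hT : IsHalf f T) (t : T) (b : Bool) :
    hT.prodBoolEquiv hf (t, !b) = f (hT.prodBoolEquiv hf (t, b)) := by
  cases b
  · rfl
  · exact (hf.1 t).symm

theorem IsHalf.dartCount_eq_add [Finite X] {f : Perm X} (hf : Involutive f) {T : Set X}
    (hT : IsHalf f T) (p : X → V) (u v : V) :
    dartCount p f u v = Nat.card {t : T // (p t, p (f t)) = (u, v)} +
      Nat.card {t : T // (p t, p (f t)) = (v, u)} := by
  have tails : {t : T // (p t, p (f t)) = (u, v)} ≃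
      {x : {x // p x = u ∧ p (f x) = v} // x.1 ∈ T} :=
    { toFun t := ⟨⟨t.1, Prod.ext_iff.mp t.2⟩, t.1.2⟩
      invFun x := ⟨⟨x.1, x.2⟩, Prod.ext x.1.2.1 x.1.2.2⟩ }
  have heads : {t : T // (p t, p (f t)) = (v, u)} ≃
      {x : {x // p x = u ∧ p (f x) = v} // x.1 ∉ T} :=
    { toFun t := ⟨⟨f t.1, (Prod.ext_iff.mp t.2).2, by rw [hf]; exact (Prod.ext_iff.mp t.2).1⟩,
        fun h => (hT _).mp h t.1.2⟩
      invFun x := ⟨⟨f x.1, (hT _).mpr x.2⟩, Prod.ext x.1.2.2 (by rw [hf]; exact x.1.2.1)⟩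
      left_inv t := Subtype.ext (Subtype.ext (hf _))
      right_inv x := Subtype.ext (Subtype.ext (hf _)) }
  classical
  rw [Nat.card_congr tails, Nat.card_congr heads, ← Nat.card_sum, dartCount]
  exact Nat.card_congr (sumCompl _).symm

theorem IsHalf.card_dart_eq_zero {f : Perm X} {T : Set X} [LinearOrder V] {p : X → V}
    (hle : ∀ x ∈ T, p x ≤ p (f x)) {u v : V} (h : v < u) :
    Nat.card {t : T // (p t, p (f t)) = (u, v)} = 0 := by
  have : IsEmpty {t : T // (p t, p (f t)) = (u, v)} := ⟨fun t => by
    obtain ⟨hu, hv⟩ := Prod.mk.inj t.2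
    exact (hle t.1 t.1.2).not_gt (by rwa [hu, hv])⟩
  exact Nat.card_of_isEmpty

theorem even_dartCount_self [Finite X] {f : Perm X} (hf : IsPerfectMatching f) (p : X → V) (v : V) :
    Even (dartCount p f v v) := by
  obtain ⟨T, hT, -⟩ := hf.exists_isHalf_le fun _ => ()
  exact ⟨_, hT.dartCount_eq_add hf.1 p v v⟩

theorem dartCount_comm {f : Perm X} (hf : Involutive f) (p : X → V) (u v : V) :
    dartCount p f u v = dartCount p f v u :=
  Nat.card_congr (f.subtypeEquiv fun x => by rw [hf x, and_comm])

theorem exists_equiv_of_dartCount_eq [LinearOrder V] [Finite X] [Finite Y] {p : X → V} {q : Y → V}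
    {f : Perm X} {g : Perm Y} (hf : IsPerfectMatching f) (hg : IsPerfectMatching g)
    (h : ∀ u v, dartCount p f u v = dartCount q g u v) :
    ∃ e : X ≃ Y, (∀ x, e (f x) = g (e x)) ∧ ∀ x, q (e x) = p x := by
  obtain ⟨S, hS, hle⟩ := hf.exists_isHalf_le p
  obtain ⟨T, hT, hle'⟩ := hg.exists_isHalf_le q
  have card_eq (z : V × V) : Nat.card {s : S // (p s, p (f s)) = z} =
      Nat.card {t : T // (q t, q (g t)) = z} := by
    obtain ⟨u, v⟩ := z
    have sum_eq := h u v
    rw [hS.dartCount_eq_add hf.1, hT.dartCount_eq_add hg.1] at sum_eq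
    rcases lt_trichotomy u v with huv | rfl | huv
    · rwa [IsHalf.card_dart_eq_zero hle huv, IsHalf.card_dart_eq_zero hle' huv] at sum_eq
    · lia
    · rw [IsHalf.card_dart_eq_zero hle huv, IsHalf.card_dart_eq_zero hle' huv]
  obtain ⟨e, he⟩ := exists_equiv_of_card_fiber_eq card_eq
  let E := (hS.prodBoolEquiv hf).symm.trans
    ((e.prodCongr (Equiv.refl Bool)).trans (hT.prodBoolEquiv hg))
  have E_apply (s : S) (b : Bool) : E (hS.prodBoolEquiv hf (s, b)) = hT.prodBoolEquiv hg (e s, b) :=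
    by simp only [E, trans_apply, symm_apply_apply, prodCongr_apply, Prod.map_apply, refl_apply]
  refine ⟨E, fun x => ?_, fun x => ?_⟩ <;>
    obtain ⟨⟨s, b⟩, rfl⟩ := (hS.prodBoolEquiv hf).surjective x
  · rw [← hS.prodBoolEquiv_not, E_apply, E_apply, hT.prodBoolEquiv_not]
  · rw [E_apply]
    cases b
    · exact congrArg Prod.fst (he s)
    · exact congrArg Prod.snd (he s)

theorem exists_conj_of_isPerfectMatching [Finite X] [Finite Y] {f : Perm X} {g : Perm Y}
    (hf : IsPerfectMatching f) (hg : IsPerfectMatching g) (h : Nat.card X = Nat.card Y) :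
    ∃ e : X ≃ Y, ∀ x, e (f x) = g (e x) := by
  obtain ⟨e, he, -⟩ := exists_equiv_of_dartCount_eq hf hg
    (p := fun _ => ()) (q := fun _ => ()) fun _ _ =>
      (Nat.card_congr (subtypeUnivEquiv fun _ => ⟨rfl, rfl⟩)).trans
        (h.trans (Nat.card_congr (subtypeUnivEquiv fun _ => ⟨rfl, rfl⟩)).symm)
  exact ⟨e, he⟩

end Matchings

section Multigraphs

variable {V X Y : Type*}

theorem dartCount_relabel {p : X → V} {q : Y → V} {f : Perm X} {g : Perm Y} (e : X ≃ Y) (σ : Perm V)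
    (hσ : ∀ x, q (e x) = σ (p x)) (he : ∀ x, e (f x) = g (e x)) (u v : V) :
    dartCount q g (σ u) (σ v) = dartCount p f u v :=
  Nat.card_congr (e.subtypeEquiv fun x => by
    rw [← he, hσ, hσ, σ.apply_eq_iff_eq, σ.apply_eq_iff_eq]).symm

theorem sum_dartCount [Fintype V] [Finite X] (p : X → V) (f : Perm X) (u : V) :
    ∑ v, dartCount p f u v = Nat.card {x // p x = u} := by
  rw [← Nat.card_congr (sigmaFiberEquiv fun x : {x // p x = u} => p (f x)), Nat.card_sigma]
  exact sum_congr rfl fun v _ => (Nat.card_congr (subtypeSubtypeEquivSubtypeInter _ _)).symm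

theorem card_fiber_fst (ι : Type*) (u : V) : Nat.card {x : V × ι // x.1 = u} = Nat.card ι :=
  Nat.card_congr
    { toFun x := x.1.2
      invFun i := ⟨(u, i), rfl⟩
      left_inv := by rintro ⟨⟨_, i⟩, rfl⟩; rfl }

section Adjacency

variable [DecidableEq V]

/-- The adjacency matrix of the multigraph with multiplicities `m`; loops contribute twice. -/
def adjacency (m : V → V → ℕ) (u v : V) : ℕ :=
  if u = v then 2 * m u u else m u v

/-- The multiplicity function of the multigraph whose edges are the pairs `{x, f x}` of half-edges,
the half-edge `x` being attached to the vertex `p x`. -/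
noncomputable def multigraph (p : X → V) (f : Perm X) (u v : V) : ℕ :=
  if u = v then dartCount p f u u / 2 else dartCount p f u v

theorem adjacency_injective : Injective (adjacency : (V → V → ℕ) → V → V → ℕ) := by
  intro m m' h
  ext u v
  have huv := congrFun₂ h u v
  unfold adjacency at huv
  split_ifs at huv with h
  · subst h; lia
  · exact huv

theorem adjacency_multigraph [Finite X] (p : X → V) {f : Perm X} (hf : IsPerfectMatching f) :
    adjacency (multigraph p f) = dartCount p f := by
  ext u v
  unfold adjacency multigraph
  split_ifs with h <;> try contradiction
  · subst h; exact Nat.two_mul_div_two_of_even (even_dartCount_self hf p u)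
  · rfl

theorem multigraph_relabel {p : X → V} {q : Y → V} {f : Perm X} {g : Perm Y} (e : X ≃ Y)
    (σ : Perm V) (hσ : ∀ x, q (e x) = σ (p x)) (he : ∀ x, e (f x) = g (e x)) (u v : V) :
    multigraph q g (σ u) (σ v) = multigraph p f u v := by
  simp only [multigraph, dartCount_relabel e σ hσ he, σ.apply_eq_iff_eq]

theorem multigraph_comm {f : Perm X} (hf : Involutive f) (p : X → V) (u v : V) :
    multigraph p f u v = multigraph p f v u := by
  unfold multigraph
  split_ifs with h h' h'
  · rw [h]
  · exact absurd h.symm h'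
  · exact absurd h'.symm h
  · exact dartCount_comm hf p u v

end Adjacency

theorem isCubic_iff {N : ℕ} {m : Fin N → Fin N → ℕ} :
    IsCubic m ↔ (∀ u v, m u v = m v u) ∧ ∀ u, ∑ v, adjacency m u v = 3 := by
  refine and_congr_right fun _ => forall_congr' fun u => ?_
  have off_diagonal : ∑ v ∈ univ.erase u, adjacency m u v = ∑ v ∈ univ.erase u, m u v :=
    sum_congr rfl fun v hv => if_neg (ne_of_mem_erase hv).symm
  rw [← add_sum_erase univ _ (mem_univ u), off_diagonal, adjacency, if_pos rfl]

theorem isCubic_multigraph {N : ℕ} {f : Perm (Fin N × Fin 3)} (hf : IsPerfectMatching f) :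
    IsCubic (multigraph Prod.fst f) := by
  refine isCubic_iff.mpr ⟨multigraph_comm hf.1 _, fun u => ?_⟩
  rw [adjacency_multigraph _ hf, sum_dartCount, card_fiber_fst, Nat.card_fin]

section Realization

variable [LinearOrder V] (m : V → V → ℕ)

/-- The half-edges of a concrete model of the multigraph with multiplicities `m`: `m u v` edges for
each pair `u ≤ v`, with a bit selecting one of the two ends. -/
abbrev Dart : Type _ :=
  (Σ e : {e : V × V // e.1 ≤ e.2}, Fin (m e.1.1 e.1.2)) × Bool

variable {m}

/-- The vertex to which a half-edge of the model is attached. -/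
def Dart.vertex (x : Dart m) : V :=
  bif x.2 then x.1.1.1.2 else x.1.1.1.1

theorem Dart.card_edges (u v : V) :
    Nat.card {x : {x : Dart m | x.2 = false} // (vertex x.1, vertex (boolFlip _ x.1)) = (u, v)} =
      if u ≤ v then m u v else 0 := by
  split_ifs with h
  · let edges : {x : {x : Dart m | x.2 = false} // (vertex x.1, vertex (boolFlip _ x.1)) = (u, v)} ≃
        {e : Σ e : {e : V × V // e.1 ≤ e.2}, Fin (m e.1.1 e.1.2) // e.1 = ⟨(u, v), h⟩} :=
      { toFun := fun ⟨⟨⟨e, _⟩, hb⟩, he⟩ => ⟨e, Subtype.ext (by cases hb; exact he)⟩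
        invFun e := ⟨⟨(e.1, false), rfl⟩, congrArg Subtype.val e.2⟩
        left_inv := by
          rintro ⟨⟨⟨e, b⟩, hb⟩, he⟩
          obtain rfl : b = false := hb
          rfl }
    rw [Nat.card_congr (edges.trans (sigmaSubtype _)), Nat.card_fin]
  · have : IsEmpty
        {x : {x : Dart m | x.2 = false} // (vertex x.1, vertex (boolFlip _ x.1)) = (u, v)} := by
      constructor
      rintro ⟨⟨⟨e, b⟩, hb⟩, he⟩
      obtain rfl : b = false := hb
      obtain ⟨rfl, rfl⟩ := Prod.mk.inj he
      exact h e.1.2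
    exact Nat.card_of_isEmpty

theorem Dart.dartCount_vertex [Finite V] (hm : ∀ u v, m u v = m v u) :
    dartCount (Dart.vertex (m := m)) (boolFlip _) = adjacency m := by
  have isHalf : IsHalf (boolFlip _) {x : Dart m | x.2 = false} := fun x => by
    simp [boolFlip]
  ext u v
  rw [isHalf.dartCount_eq_add isPerfectMatching_boolFlip.1, card_edges, card_edges, adjacency]
  rcases lt_trichotomy u v with h | rfl | h
  · simp [h.le, h.ne, h]
  · simp [two_mul]
  · simp [h.le, h.ne', h, hm u v]

theorem exists_multigraph_eq {N : ℕ} {m : Fin N → Fin N → ℕ} (hm : IsCubic m) :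
    ∃ f : Perm (Fin N × Fin 3), IsPerfectMatching f ∧ multigraph Prod.fst f = m := by
  obtain ⟨comm, degree⟩ := isCubic_iff.mp hm
  obtain ⟨e, he⟩ := exists_equiv_of_card_fiber_eq (p := Dart.vertex (m := m))
    (q := (Prod.fst : Fin N × Fin 3 → Fin N)) fun u => by
      rw [← sum_dartCount _ (boolFlip _), Dart.dartCount_vertex comm, degree, card_fiber_fst,
        Nat.card_fin]
  have hf : IsPerfectMatching (e.permCongr (boolFlip _)) :=
    isPerfectMatching_permCongr.mpr isPerfectMatching_boolFlip
  refine ⟨_, hf, adjacency_injective ?_⟩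
  rw [adjacency_multigraph _ hf, ← Dart.dartCount_vertex comm]
  ext u v
  exact dartCount_relabel e 1 he (fun x => by simp) u v

end Realization

end Multigraphs

section Isomorphism

variable {V ι : Type*}

/-- The permutations of the half-edges `V × ι` that preserve the partition into vertices. -/
def fiberPerm (V ι : Type*) : Subgroup (Perm (V × ι)) where
  carrier := {g | ∃ σ : Perm V, ∀ x, (g x).1 = σ x.1}
  one_mem' := ⟨1, fun _ => rfl⟩
  mul_mem' := fun ⟨σ, hσ⟩ ⟨τ, hτ⟩ => ⟨σ * τ, fun x => by simp [hσ, hτ]⟩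
  inv_mem' := fun {g} ⟨σ, hσ⟩ => ⟨σ⁻¹, fun x => by
    rw [Perm.eq_inv_iff_eq, ← hσ, ← Perm.mul_apply, mul_inv_cancel, Perm.one_apply]⟩

/-- A partition-preserving permutation amounts to a permutation of the vertices together with, for
each vertex, a permutation of its half-edges. -/
noncomputable def prodShearEquiv [Finite ι] [Nonempty ι] :
    Perm V × (V → Perm ι) ≃ fiberPerm V ι :=
  Equiv.ofBijective (fun g => ⟨g.1.prodShear g.2, g.1, fun _ => rfl⟩) <| by
    constructor
    · rintro ⟨σ, τ⟩ ⟨σ', τ'⟩ h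
      have apply_eq (v : V) (i : ι) : (σ v, τ v i) = (σ' v, τ' v i) :=
        Equiv.congr_fun (congrArg Subtype.val h) (v, i)
      exact Prod.ext (Equiv.ext fun v => congrArg Prod.fst (apply_eq v (Classical.arbitrary ι)))
        (funext fun v => Equiv.ext fun i => congrArg Prod.snd (apply_eq v i))
    · rintro ⟨g, σ, hσ⟩
      have injective_snd (v : V) : Injective fun i => (g (v, i)).2 := fun i j hij =>
        congrArg Prod.snd (g.injective (a₁ := (v, i)) (a₂ := (v, j))
          (Prod.ext ((hσ (v, i)).trans (hσ (v, j)).symm) hij))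
      refine ⟨(σ, fun v => ofBijective _ (Finite.injective_iff_bijective.mp (injective_snd v))),
        Subtype.ext (Equiv.ext fun x => Prod.ext (hσ x).symm rfl)⟩

/-- Permutations act on perfect matchings by conjugation. -/
instance (X : Type*) : MulAction (Perm X) (PerfectMatching X) where
  smul g f := ⟨g.permCongr f.1, isPerfectMatching_permCongr.mpr f.2⟩
  one_smul _ := rfl
  mul_smul _ _ _ := rfl

/-- The number of perfect matchings of `X` commuting with `g`. -/
noncomputable def commutingMatchingCount {X : Type*} (g : Perm X) : ℕ :=
  Nat.card {f : Perm X // IsPerfectMatching f ∧ Commute f g}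

theorem card_fixedBy_perfectMatching {X : Type*} (g : Perm X) :
    Nat.card (MulAction.fixedBy (PerfectMatching X) g) = commutingMatchingCount g :=
  Nat.card_congr <| (subtypeEquivRight fun _ => Subtype.ext_iff).trans <|
    (subtypeSubtypeEquivSubtypeInter _ fun f => g.permCongr f = f).trans <|
      subtypeEquivRight fun _ => and_congr_right fun _ =>
        permCongr_eq_iff.trans (Commute.symm_iff.trans Equiv.ext_iff).symm

theorem cubicIsoRel_multigraph_iff {N : ℕ} (f f' : PerfectMatching (Fin N × Fin 3)) :
    CubicIsoRel N ⟨multigraph Prod.fst f.1, isCubic_multigraph f.2⟩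
        ⟨multigraph Prod.fst f'.1, isCubic_multigraph f'.2⟩ ↔
      f' ∈ MulAction.orbit (fiberPerm (Fin N) (Fin 3)) f := by
  constructor
  · rintro ⟨σ, hσ : ∀ u v, multigraph Prod.fst f'.1 (σ u) (σ v) = multigraph Prod.fst f.1 u v⟩
    have dartCount_eq (u v : Fin N) :
        dartCount Prod.fst f.1 u v = dartCount (fun x => σ.symm x.1) f'.1 u v := by
      rw [← adjacency_multigraph _ f.2, ← dartCount_relabel (q := Prod.fst) (g := f'.1) 1 σ
        (fun x => (σ.apply_symm_apply x.1).symm) fun _ => rfl, ← adjacency_multigraph _ f'.2]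
      simp only [adjacency, σ.apply_eq_iff_eq, hσ]
    obtain ⟨g, hg, hgσ⟩ := exists_equiv_of_dartCount_eq f.2 f'.2 dartCount_eq
    exact ⟨⟨g, σ, fun x => σ.symm_apply_eq.mp (hgσ x)⟩, Subtype.ext (permCongr_eq_iff.mpr hg)⟩
  · rintro ⟨⟨g, σ, hσ⟩, rfl⟩
    exact ⟨σ, multigraph_relabel g σ hσ (permCongr_eq_iff.mp rfl)⟩

theorem cubicIsoRel_equivalence (N : ℕ) : Equivalence (CubicIsoRel N) where
  refl _ := ⟨1, fun _ _ => rfl⟩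
  symm := fun ⟨σ, hσ⟩ => ⟨σ⁻¹, fun u v => by simp [← hσ]⟩
  trans := fun ⟨σ, hσ⟩ ⟨τ, hτ⟩ => ⟨τ * σ, fun u v => (hτ _ _).trans (hσ u v)⟩

theorem sum_card_fixedBy (G Ω : Type*) [Group G] [Fintype G] [MulAction G Ω] [Finite Ω] :
    ∑ g : G, Nat.card (MulAction.fixedBy Ω g) =
      Nat.card (MulAction.orbitRel.Quotient G Ω) * Nat.card G := by
  rw [← Nat.card_sigma, Nat.card_congr (MulAction.sigmaFixedByEquivOrbitsProdGroup G Ω),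
    Nat.card_prod]

theorem I_eq_card_orbits (N : ℕ) :
    I N = Nat.card (MulAction.orbitRel.Quotient (fiberPerm (Fin N) (Fin 3))
      (PerfectMatching (Fin N × Fin 3))) := by
  symm
  refine Nat.card_eq_of_bijective
    (Quot.map (fun f => ⟨multigraph Prod.fst f.1, isCubic_multigraph f.2⟩)
      fun f f' h => (cubicIsoRel_multigraph_iff f f').mpr (MulAction.mem_orbit_symm.mp h)) ⟨?_, ?_⟩
  · rintro ⟨f⟩ ⟨f'⟩ h
    have iso := (cubicIsoRel_equivalence N).quot_mk_eq_iff _ _ |>.mp h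
    exact Quot.sound (MulAction.mem_orbit_symm.mp ((cubicIsoRel_multigraph_iff f f').mp iso))
  · rintro ⟨m, hm⟩
    obtain ⟨f, hf, rfl⟩ := exists_multigraph_eq hm
    exact ⟨Quot.mk _ ⟨f, hf⟩, rfl⟩

theorem I_mul_card_eq_sum_commutingMatchingCount (N : ℕ) :
    I N * (N ! * 6 ^ N) = ∑ g : Perm (Fin N) × (Fin N → Perm (Fin 3)),
      commutingMatchingCount (g.1.prodShear g.2) := by
  classical
  have card_group : Nat.card (fiberPerm (Fin N) (Fin 3)) = N ! * 6 ^ N := by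
    rw [← Nat.card_congr prodShearEquiv]
    simp [Fintype.card_perm, Nat.factorial]
  have := Fintype.ofFinite (fiberPerm (Fin N) (Fin 3))
  rw [I_eq_card_orbits, ← card_group, ← sum_card_fixedBy]
  exact (Fintype.sum_equiv prodShearEquiv _ _ fun g => (card_fixedBy_perfectMatching _).symm).symm

end Isomorphism

section CommutingMatchings

variable {X Y : Type*}

theorem commutingMatchingCount_congr (e : X ≃ Y) {g : Perm X} {g' : Perm Y}
    (h : ∀ x, e (g x) = g' (e x)) : commutingMatchingCount g = commutingMatchingCount g' := by
  obtain rfl := permCongr_eq_iff.mpr h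
  exact Nat.card_congr (e.permCongr.subtypeEquiv fun f => and_congr isPerfectMatching_permCongr.symm
    (commute_map_iff e.permCongrHom.injective).symm)

/-- The number of perfect matchings of a set of `n` points. -/
noncomputable def matchingCount (n : ℕ) : ℕ :=
  Nat.card (PerfectMatching (Fin n))

theorem card_perfectMatching [Finite X] :
    Nat.card (PerfectMatching X) = matchingCount (Nat.card X) :=
  Nat.card_congr ((Finite.equivFin X).permCongr.subtypeEquiv fun _ =>
    isPerfectMatching_permCongr.symm)

theorem card_moved [Fintype X] [DecidableEq X] (g : Perm X) :
    Fintype.card {x // ¬g x = x} = #g.support :=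
  Fintype.card_subtype _

theorem card_fixed [Fintype X] [DecidableEq X] (g : Perm X) :
    Nat.card {x // g x = x} = Fintype.card X - #g.support := by
  rw [← card_moved, Nat.card_eq_fintype_card, Fintype.card_subtype_compl,
    Nat.sub_sub_self (Fintype.card_subtype_le _)]

theorem apply_eq_self_iff_of_commute {f g : Perm X} (h : Commute f g) (x : X) :
    g (f x) = f x ↔ g x = x := by
  rw [← Perm.mul_apply, ← h.eq, Perm.mul_apply, f.apply_eq_iff_eq]

theorem subtypeCongr_subtypePerm {p : X → Prop} [DecidablePred p] (f : Perm X)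
    (h : ∀ x, p (f x) ↔ p x) :
    (f.subtypePerm h).subtypeCongr (f.subtypePerm fun x => not_congr (h x)) = f := by
  ext x
  by_cases hx : p x <;> simp [hx]

theorem isPerfectMatching_subtypeCongr {p : X → Prop} [DecidablePred p] (f₁ : Perm {x // p x})
    (f₂ : Perm {x // ¬p x}) :
    IsPerfectMatching (f₁.subtypeCongr f₂) ↔ IsPerfectMatching f₁ ∧ IsPerfectMatching f₂ := by
  rw [Perm.subtypeCongr, isPerfectMatching_permCongr]
  simp only [IsPerfectMatching, Involutive, Sum.forall, sumCongr_apply, Sum.map_inl, Sum.map_inr,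
    Sum.inl.injEq, Sum.inr.injEq, Ne]
  tauto

theorem commute_subtypeCongr {p : X → Prop} [DecidablePred p] {f₁ g₁ : Perm {x // p x}}
    {f₂ g₂ : Perm {x // ¬p x}} :
    Commute (f₁.subtypeCongr f₂) (g₁.subtypeCongr g₂) ↔ Commute f₁ g₁ ∧ Commute f₂ g₂ :=
  (commute_map_iff (f := Perm.subtypeCongrHom p) (x := (f₁, f₂)) (y := (g₁, g₂))
    (Perm.subtypeCongrHom_injective p)).trans Prod.commute_iff

/-- The permutation induced by `g` on the points it moves. -/
def movedPerm (g : Perm X) : Perm {x // ¬g x = x} :=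
  g.subtypePerm fun _ => not_congr g.apply_eq_iff_eq

theorem commutingMatchingCount_eq_mul_movedPerm [Finite X] (g : Perm X) :
    commutingMatchingCount g =
      matchingCount (Nat.card {x // g x = x}) * commutingMatchingCount (movedPerm g) := by
  classical
  rw [← card_perfectMatching, commutingMatchingCount, commutingMatchingCount, ← Nat.card_prod]
  have g_eq : (1 : Perm {x // g x = x}).subtypeCongr (movedPerm g) = g := by
    ext x
    by_cases hx : g x = x <;> simp [hx, movedPerm]
  symm
  refine Nat.card_eq_of_bijective
    (fun f : PerfectMatching {x // g x = x} ×
        {f // IsPerfectMatching f ∧ Commute f (movedPerm g)} =>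
      ⟨f.1.1.subtypeCongr f.2.1, (isPerfectMatching_subtypeCongr _ _).mpr ⟨f.1.2, f.2.2.1⟩,
        ?_⟩) ⟨?_, ?_⟩
  · conv_rhs => rw [← g_eq]
    exact commute_subtypeCongr.mpr ⟨Commute.one_right _, f.2.2.2⟩
  · intro f f' h
    obtain ⟨h₁, h₂⟩ := Prod.mk.inj (Perm.subtypeCongrHom_injective _
      (a₁ := (f.1.1, f.2.1)) (a₂ := (f'.1.1, f'.2.1)) (congrArg Subtype.val h))
    exact Prod.ext (Subtype.ext h₁) (Subtype.ext h₂)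
  · rintro ⟨f, hf, hfg⟩
    have fixed_iff := apply_eq_self_iff_of_commute hfg
    have f_eq := subtypeCongr_subtypePerm (p := fun x => g x = x) f fixed_iff
    obtain ⟨hf₁, hf₂⟩ := (isPerfectMatching_subtypeCongr _ _).mp (f_eq.symm ▸ hf)
    obtain ⟨-, hc⟩ := commute_subtypeCongr.mp ((congrArg₂ Commute f_eq g_eq).mpr hfg)
    exact ⟨(⟨_, hf₁⟩, ⟨_, hf₂, hc⟩), Subtype.ext f_eq⟩

end CommutingMatchings

section Cycles

variable {α Y : Type*}

theorem apply_eq_of_sameCycle [Finite α] {g : Perm α} {c : α → Y} (hc : ∀ x, c (g x) = c x)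
    {x y : α} (h : g.SameCycle x y) : c x = c y := by
  obtain ⟨n, rfl⟩ := h.exists_nat_pow_eq
  rw [← Perm.iterate_eq_pow]
  simpa only [iterate_id, id] using ((show Semiconj c g id from hc).iterate_right n x).symm

/-- A representative of the cycle of `g` through `x`. -/
noncomputable def cycleRep (g : Perm α) (x : α) : α :=
  (Quotient.mk (Perm.SameCycle.setoid g) x).out

theorem sameCycle_cycleRep (g : Perm α) (x : α) : g.SameCycle (cycleRep g x) x :=
  Quotient.mk_out (s := Perm.SameCycle.setoid g) x

theorem cycleRep_eq_iff {g : Perm α} {x y : α} : cycleRep g x = cycleRep g y ↔ g.SameCycle x y :=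
  Quotient.out_inj.trans Quotient.eq

theorem cycleRep_apply (g : Perm α) (x : α) : cycleRep g (g x) = cycleRep g x :=
  cycleRep_eq_iff.mpr (Perm.sameCycle_apply_left.mpr (Perm.SameCycle.refl g x))

variable [Fintype α] [DecidableEq α]

/-- The representatives of the nontrivial cycles of `g`. -/
noncomputable def cycleReps (g : Perm α) : Finset α :=
  g.support.image (cycleRep g)

theorem cycleRep_of_mem_cycleReps {g : Perm α} {x : α} (hx : x ∈ cycleReps g) :
    cycleRep g x = x := by
  obtain ⟨y, -, rfl⟩ := mem_image.mp hx
  exact cycleRep_eq_iff.mpr (sameCycle_cycleRep g y)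

theorem cycleReps_subset_support (g : Perm α) : cycleReps g ⊆ g.support := by
  intro x hx
  obtain ⟨y, hy, rfl⟩ := mem_image.mp hx
  exact Perm.mem_support.mpr (Perm.SameCycle.apply_eq_self_iff (sameCycle_cycleRep g y) |>.not.mpr
    (Perm.mem_support.mp hy))

theorem card_cycleReps (g : Perm α) : #(cycleReps g) = Multiset.card g.cycleType := by
  rw [Perm.cycleType_def, Multiset.card_map]
  refine card_bij (fun x _ => g.cycleOf x)
    (fun x hx => Perm.cycleOf_mem_cycleFactorsFinset_iff.mpr (cycleReps_subset_support g hx))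
    (fun x hx y hy h => ?_) fun k hk => ?_
  · have y_mem := Perm.mem_support_cycleOf_iff.mpr
      ⟨Perm.SameCycle.refl g y, cycleReps_subset_support g hy⟩
    rw [← h] at y_mem
    rw [← cycleRep_of_mem_cycleReps hx, ← cycleRep_of_mem_cycleReps hy, cycleRep_eq_iff]
    exact (Perm.mem_support_cycleOf_iff.mp y_mem).1
  · obtain ⟨x, hx⟩ := (Perm.mem_cycleFactorsFinset_iff.mp hk).1.nonempty_support
    refine ⟨cycleRep g x, mem_image_of_mem _ (Perm.mem_cycleFactorsFinset_support_le hk hx), ?_⟩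
    rw [(sameCycle_cycleRep g x).cycleOf_eq, ← Perm.cycle_is_cycleOf hx hk]

theorem two_mul_card_cycleType_le (σ : Perm α) :
    2 * Multiset.card σ.cycleType ≤ #σ.support := by
  rw [← σ.sum_cycleType, mul_comm, ← smul_eq_mul]
  exact Multiset.card_nsmul_le_sum fun _ => Perm.two_le_of_mem_cycleType

theorem card_cycleType_le_of_forall_exists_sameCycle {g : Perm α} (s : Finset α)
    (hs : ∀ x ∈ g.support, ∃ y ∈ s, g.SameCycle x y) : Multiset.card g.cycleType ≤ #s := by
  rw [← card_cycleReps]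
  refine (card_le_card fun x hx => ?_).trans (card_image_le (s := s) (f := cycleRep g))
  obtain ⟨y, hy, rfl⟩ := mem_image.mp hx
  obtain ⟨z, hz, hyz⟩ := hs y hy
  exact mem_image.mpr ⟨z, hz, cycleRep_eq_iff.mpr hyz.symm⟩

theorem card_invariant_colorings [Finite Y] (g : Perm α) (y₀ : Y) :
    Nat.card {c : α → Y // (∀ x, c (g x) = c x) ∧ ∀ x, g x = x → c x = y₀} =
      Nat.card Y ^ Multiset.card g.cycleType := by
  have rep_mem {x : α} (hx : x ∈ g.support) : cycleRep g x ∈ cycleReps g := mem_image_of_mem _ hx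
  let colorings : {c : α → Y // (∀ x, c (g x) = c x) ∧ ∀ x, g x = x → c x = y₀} ≃
      (cycleReps g → Y) :=
    { toFun c x := c.1 x
      invFun k := ⟨fun x => if hx : x ∈ g.support then k ⟨cycleRep g x, rep_mem hx⟩ else y₀,
        fun x => by simp only [Perm.apply_mem_support, cycleRep_apply],
        fun x hx => dif_neg (Perm.notMem_support.mpr hx)⟩
      left_inv c := Subtype.ext <| funext fun x => by
        dsimp only
        split_ifs with hx
        · exact apply_eq_of_sameCycle c.2.1 (sameCycle_cycleRep g x)
        · exact (c.2.2 x (Perm.notMem_support.mp hx)).symm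
      right_inv k := funext fun x => by
        simp only [cycleReps_subset_support g x.2, dite_true, cycleRep_of_mem_cycleReps x.2] }
  rw [Nat.card_congr colorings, Nat.card_fun, Nat.card_eq_finsetCard, card_cycleReps]

end Cycles

section Involutions

variable {α : Type*} [Fintype α] [DecidableEq α]

theorem involutive_iff_cycleType {f : Perm α} :
    Involutive f ↔ f.cycleType = Multiset.replicate (Multiset.card f.cycleType) 2 := by
  rw [Multiset.eq_replicate_card, ← Perm.pow_prime_eq_one_iff, Equiv.ext_iff]
  rfl

theorem card_cycleType_eq_replicate_two_mul {i : ℕ} (h : 2 * i ≤ Fintype.card α) :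
    #{f : Perm α | f.cycleType = Multiset.replicate i 2} *
      ((Fintype.card α - 2 * i)! * 2 ^ i * i !) = (Fintype.card α)! := by
  have count := Perm.card_of_cycleType_mul_eq (α := α) (Multiset.replicate i 2)
  have sum_eq : (Multiset.replicate i 2).sum = 2 * i := by simp [mul_comm]
  have prod_eq :
      ∏ n ∈ (Multiset.replicate i 2).toFinset, ((Multiset.replicate i 2).count n)! = i ! := by
    rcases i.eq_zero_or_pos with rfl | hi
    · rfl
    · rw [Multiset.toFinset_replicate, if_neg hi.ne', prod_singleton, Multiset.count_replicate_self]
  rwa [if_pos ⟨by rwa [sum_eq], fun k hk => (Multiset.eq_of_mem_replicate hk).ge⟩, sum_eq, prod_eq,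
    Multiset.prod_replicate] at count

theorem IsPerfectMatching.even_card {X : Type*} [Finite X] {f : Perm X} (hf : IsPerfectMatching f) :
    Even (Nat.card X) := by
  obtain ⟨T, hT, -⟩ := hf.exists_isHalf_le fun _ => ()
  rw [← Nat.card_congr (hT.prodBoolEquiv hf), Nat.card_prod, Nat.card_eq_fintype_card (α := Bool),
    Fintype.card_bool]
  exact even_two.mul_left _

theorem isPerfectMatching_iff_cycleType {n : ℕ} (hn : Fintype.card α = 2 * n) {f : Perm α} :
    IsPerfectMatching f ↔ f.cycleType = Multiset.replicate n 2 := by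
  constructor
  · intro hf
    have cycleType_eq := involutive_iff_cycleType.mp hf.1
    have card_support : #f.support = 2 * n := by
      rw [← hn, eq_univ_of_forall fun x => Perm.mem_support.mpr (hf.2 x), card_univ]
    rw [← f.sum_cycleType, cycleType_eq, Multiset.sum_replicate] at card_support
    rwa [show Multiset.card f.cycleType = n by lia] at cycleType_eq
  · intro hf
    have card_support : #f.support = 2 * n := by
      rw [← f.sum_cycleType, hf, Multiset.sum_replicate, smul_eq_mul, mul_comm]
    refine ⟨involutive_iff_cycleType.mpr (by rw [hf, Multiset.card_replicate]), fun x => ?_⟩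
    rw [← Perm.mem_support, eq_univ_of_card _ (card_support.trans hn.symm)]
    exact mem_univ x

theorem matchingCount_of_not_even {n : ℕ} (hn : ¬Even n) : matchingCount n = 0 := by
  have : IsEmpty (PerfectMatching (Fin n)) := ⟨fun f => hn (Nat.card_fin n ▸ f.2.even_card)⟩
  exact Nat.card_of_isEmpty

theorem matchingCount_two_mul (n : ℕ) : matchingCount (2 * n) * (2 ^ n * n !) = (2 * n)! := by
  have hn : Fintype.card (Fin (2 * n)) = 2 * n := Fintype.card_fin _
  rw [matchingCount, Nat.card_congr (subtypeEquivRight fun _ => isPerfectMatching_iff_cycleType hn),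
    Nat.card_eq_fintype_card, Fintype.card_subtype]
  simpa [hn] using card_cycleType_eq_replicate_two_mul (α := Fin (2 * n)) (i := n) hn.ge

theorem matchingCount_two_mul_add_two (n : ℕ) :
    matchingCount (2 * n + 2) = (2 * n + 1) * matchingCount (2 * n) := by
  have pos : 0 < 2 ^ (n + 1) * (n + 1)! := by positivity
  refine Nat.eq_of_mul_eq_mul_right pos ?_
  rw [← mul_add_one, matchingCount_two_mul, mul_add_one, Nat.factorial_succ, Nat.factorial_succ,
    ← matchingCount_two_mul, Nat.factorial_succ]
  ring

end Involutions

section SymmetricMatchings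

variable {α : Type*}

/-- The number of perfect matchings of `2a` points, grouped into `a` pairs, that are invariant under
exchanging the two points of every pair simultaneously. -/
noncomputable def flipInvariantCount (a : ℕ) : ℕ :=
  commutingMatchingCount (boolFlip (Fin a))

theorem commute_boolFlip_iff {f : Perm (α × Bool)} :
    Commute f (boolFlip α) ↔ f ∈ fiberPerm α Bool := by
  constructor
  · intro h
    have fst_apply {f : Perm (α × Bool)} (h : Commute f (boolFlip α)) (a : α) (b : Bool) :
        (f (a, b)).1 = (f (a, false)).1 := by
      cases b
      · rfl
      · exact (congrArg Prod.fst (Equiv.congr_fun h.eq (a, false)) :)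
    let σ : Perm α :=
      { toFun a := (f (a, false)).1
        invFun a := (f.symm (a, false)).1
        left_inv a := by
          change (f.symm ((f (a, false)).1, false)).1 = a
          rw [← fst_apply (f := f.symm) h.inv_left (f (a, false)).1 (f (a, false)).2, Prod.mk.eta,
            f.symm_apply_apply]
        right_inv a := by
          change (f ((f.symm (a, false)).1, false)).1 = a
          rw [← fst_apply h (f.symm (a, false)).1 (f.symm (a, false)).2, Prod.mk.eta,
            f.apply_symm_apply] }
    exact ⟨σ, fun x => fst_apply h x.1 x.2⟩
  · rintro ⟨σ, hσ⟩
    refine Equiv.ext fun x => Prod.ext ((hσ _).trans (hσ x).symm) ?_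
    have ne : f (boolFlip α x) ≠ f x := f.injective.ne (isPerfectMatching_boolFlip.2 x)
    exact Bool.eq_not.mpr fun h => ne (Prod.ext ((hσ _).trans (hσ x).symm) h)

theorem isPerfectMatching_prodShear_iff {σ : Perm α} {τ : α → Perm Bool} :
    IsPerfectMatching (σ.prodShear τ) ↔
      Involutive σ ∧ (∀ a, τ (σ a) = τ a) ∧ ∀ a, σ a = a → τ a = boolNot := by
  have eq_iff : ∀ p q : Perm Bool, p = q ↔ ∀ b, p (q b) = b := by decide
  have eq_boolNot_iff : ∀ p : Perm Bool, p = boolNot ↔ ∀ b, p b ≠ b := by decide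
  constructor
  · rintro ⟨hf, hfx⟩
    have eq_self {a : α} {b : Bool} (h : (σ a, τ a b) = (a, b)) : False := hfx (a, b) h
    exact ⟨fun a => congrArg Prod.fst (hf (a, false)),
      fun a => (eq_iff _ _).mpr fun b => congrArg Prod.snd (hf (a, b)),
      fun a ha => (eq_boolNot_iff _).mpr fun b hb => eq_self (Prod.ext ha hb)⟩
  · rintro ⟨hσ, hτ, hτx⟩
    exact ⟨fun x => Prod.ext (hσ x.1) ((eq_iff _ _).mp (hτ x.1) x.2), fun x hx =>
      (eq_boolNot_iff _).mp (hτx x.1 (congrArg Prod.fst hx)) x.2 (congrArg Prod.snd hx)⟩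

open Classical in
theorem commutingMatchingCount_boolFlip [Fintype α] [DecidableEq α] :
    commutingMatchingCount (boolFlip α) =
      ∑ σ ∈ {σ : Perm α | Involutive σ}, 2 ^ Multiset.card σ.cycleType := by
  let IsShear (σ : Perm α) (τ : α → Perm Bool) : Prop :=
    Involutive σ ∧ (∀ a, τ (σ a) = τ a) ∧ ∀ a, σ a = a → τ a = boolNot
  let e : {f : Perm (α × Bool) // IsPerfectMatching f ∧ Commute f (boolFlip α)} ≃
      Σ σ : Perm α, {τ : α → Perm Bool // IsShear σ τ} :=
    (subtypeEquivRight fun f => and_comm.trans (and_congr_left' commute_boolFlip_iff)).trans <|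
      (subtypeSubtypeEquivSubtypeInter _ IsPerfectMatching).symm.trans <|
        (prodShearEquiv.subtypeEquiv fun _ => isPerfectMatching_prodShear_iff.symm).symm.trans <|
          subtypeProdEquivSigmaSubtype IsShear
  rw [commutingMatchingCount, Nat.card_congr e, Nat.card_sigma, sum_filter]
  refine sum_congr rfl fun σ _ => ?_
  split_ifs with hσ
  · have isShear_iff (τ : α → Perm Bool) : IsShear σ τ ↔
        (∀ a, τ (σ a) = τ a) ∧ ∀ a, σ a = a → τ a = boolNot := and_iff_right hσ
    rw [Nat.card_congr (subtypeEquivRight isShear_iff), card_invariant_colorings,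
      Nat.card_eq_fintype_card, Fintype.card_perm, Fintype.card_bool]
    rfl
  · exact Nat.card_eq_zero.mpr (.inl ⟨fun τ => hσ τ.2.1⟩)

open Classical in
theorem flipInvariantCount_eq_sum (a : ℕ) :
    (flipInvariantCount a : ℝ) = ∑ i ∈ range (a / 2 + 1), (a ! : ℝ) / (i ! * (a - 2 * i)!) := by
  have card_mem (σ : Perm (Fin a)) : Multiset.card σ.cycleType ∈ range (a / 2 + 1) := by
    have two_mul_le := two_mul_card_cycleType_le σ
    have support_le := card_le_univ σ.support
    rw [Fintype.card_fin] at support_le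
    exact mem_range.mpr (by lia)
  rw [flipInvariantCount, commutingMatchingCount_boolFlip,
    ← sum_fiberwise_of_maps_to (g := fun σ => Multiset.card σ.cycleType)
      fun σ _ => card_mem σ, Nat.cast_sum]
  refine sum_congr rfl fun i hi => ?_
  have fiber_eq : univ.filter (fun σ : Perm (Fin a) => Involutive σ ∧
      Multiset.card σ.cycleType = i) = univ.filter (·.cycleType = Multiset.replicate i 2) := by
    ext σ
    simp only [mem_filter_univ]
    constructor
    · rintro ⟨hσ, rfl⟩
      exact involutive_iff_cycleType.mp hσ
    · intro hσ
      have card_eq : Multiset.card σ.cycleType = i := by rw [hσ, Multiset.card_replicate]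
      exact ⟨involutive_iff_cycleType.mpr (card_eq.symm ▸ hσ), card_eq⟩
  have count := card_cycleType_eq_replicate_two_mul (α := Fin a) (i := i) (by
    rw [Fintype.card_fin]; have := mem_range.mp hi; lia)
  rw [Fintype.card_fin] at count
  rw [sum_congr rfl fun σ hσ => by rw [(mem_filter.mp hσ).2], sum_const, filter_filter, fiber_eq,
    eq_div_iff (by positivity), smul_eq_mul, ← count]
  push_cast
  ring

theorem commutingMatchingCount_of_involutive [Fintype α] [DecidableEq α] {g : Perm α}
    (hg : Involutive g) {a : ℕ} (ha : #g.support = 2 * a) :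
    commutingMatchingCount g = matchingCount (Fintype.card α - 2 * a) * flipInvariantCount a := by
  have isPerfectMatching_movedPerm : IsPerfectMatching (movedPerm g) :=
    ⟨fun x => Subtype.ext (hg x), fun x h => x.2 (congrArg Subtype.val h)⟩
  obtain ⟨e, he⟩ := exists_conj_of_isPerfectMatching isPerfectMatching_movedPerm
    (isPerfectMatching_boolFlip (X := Fin a)) (by
      rw [Nat.card_eq_fintype_card, card_moved, ha, Nat.card_prod, Nat.card_fin,
        Nat.card_eq_fintype_card, Fintype.card_bool, mul_comm])
  rw [commutingMatchingCount_eq_mul_movedPerm, card_fixed, ha, commutingMatchingCount_congr e he]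
  rfl

end SymmetricMatchings

section FixedPointFree

variable {α κ : Type*}

theorem zpow_apply_eq_zpow_apply {g : Perm α} {x : α} {i j : ℤ} (hi : (g ^ (2 * i)) x = x)
    (hi' : (g ^ i) x ≠ x) (hj : (g ^ (2 * j)) x = x) (hj' : (g ^ j) x ≠ x) :
    (g ^ i) x = (g ^ j) x := by
  simp only [← Perm.smul_def, Ne, MulAction.zpow_smul_eq_iff_period_dvd] at hi hi' hj hj'
  obtain ⟨k, hk⟩ := hi
  obtain ⟨l, hl⟩ := hj
  have odd_of_not_dvd {i k : ℤ} (hk : 2 * i = MulAction.period g x * k)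
      (hi : ¬(MulAction.period g x : ℤ) ∣ i) : Odd k := by
    rw [← Int.not_even_iff_odd]
    rintro ⟨k', rfl⟩
    exact hi ⟨k', by linarith⟩
  obtain ⟨m, hm⟩ := (odd_of_not_dvd hk hi').sub_odd (odd_of_not_dvd hl hj')
  have fixed : (g ^ (i - j)) x = x := by
    rw [← Perm.smul_def, MulAction.zpow_smul_eq_iff_period_dvd]
    exact ⟨m, mul_left_cancel₀ two_ne_zero
      (by linear_combination hk - hl + MulAction.period g x * hm)⟩
  rw [← sub_add_cancel i j, add_comm, zpow_add, Perm.mul_apply, fixed]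

theorem sameCycle_apply_apply_iff {f g : Perm α} (h : Commute f g) {x y : α} :
    g.SameCycle (f x) (f y) ↔ g.SameCycle x y := by
  simp only [Perm.SameCycle, ← Perm.mul_apply, ← (h.zpow_right _).eq]
  simp only [Perm.mul_apply, f.apply_eq_iff_eq]

theorem apply_eq_apply_of_sameCycle {f f' g : Perm α} (hfg : Commute f g) (hfg' : Commute f' g)
    {x y : α} (h : g.SameCycle x y) (hx : f x = f' x) : f y = f' y := by
  obtain ⟨i, rfl⟩ := h
  simp only [← Perm.mul_apply, (hfg.zpow_right i).eq, (hfg'.zpow_right i).eq]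
  simp only [Perm.mul_apply, hx]

variable [Fintype α] [DecidableEq α] [LinearOrder κ] {g : Perm α} {rank : α → κ}

/-- The representatives of the cycles of `g` that `f` maps to a cycle of larger rank. -/
noncomputable def raisedReps (g : Perm α) (rank : α → κ) (f : Perm α) : Finset α :=
  {x ∈ cycleReps g | rank x < rank (f x)}

theorem two_mul_card_raisedReps_le (hrank : ∀ x y, rank x = rank y ↔ g.SameCycle x y) {f : Perm α}
    (hf : Involutive f) (hfg : Commute f g) (hg : ∀ x, g x ≠ x) :
    2 * #(raisedReps g rank f) ≤ Multiset.card g.cycleType := by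
  have card_le : #(raisedReps g rank f) ≤ #(cycleReps g \ raisedReps g rank f) := by
    refine card_le_card_of_injOn (fun x => cycleRep g (f x)) (fun x hx => ?_) fun x hx y hy h => ?_
    · have rank_rep : rank (cycleRep g (f x)) = rank (f x) :=
        (hrank _ _).mpr (sameCycle_cycleRep g _)
      have rank_apply_rep : rank (f (cycleRep g (f x))) = rank x := by
        rw [hrank, ← sameCycle_apply_apply_iff hfg, hf]
        exact sameCycle_cycleRep g _
      refine mem_sdiff.mpr ⟨mem_image_of_mem _ (Perm.mem_support.mpr (hg _)), fun h => ?_⟩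
      have lt := (mem_filter.mp h).2
      rw [rank_rep, rank_apply_rep] at lt
      exact lt.asymm (mem_filter.mp hx).2
    · rw [← cycleRep_of_mem_cycleReps (mem_filter.mp hx).1,
        ← cycleRep_of_mem_cycleReps (mem_filter.mp hy).1, cycleRep_eq_iff]
      exact (sameCycle_apply_apply_iff hfg).mp (cycleRep_eq_iff.mp h)
  have subset : raisedReps g rank f ⊆ cycleReps g := filter_subset _ _
  have := card_le_card subset
  rw [card_sdiff_of_subset subset] at card_le
  rw [← card_cycleReps]
  lia

theorem rank_apply_eq_of_ne (hrank : ∀ x y, rank x = rank y ↔ g.SameCycle x y)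
    (hg : ∀ x, g x ≠ x) {f f' : Perm α} (hf : Involutive f) (hf' : Involutive f')
    (hfg : Commute f g) (hfg' : Commute f' g) (heq : ∀ x ∈ raisedReps g rank f, f x = f' x) {x : α}
    (hx : f (cycleRep g x) ≠ f' (cycleRep g x)) :
    rank (f (cycleRep g x)) = rank (cycleRep g x) := by
  have rep_mem (y : α) : cycleRep g y ∈ cycleReps g :=
    mem_image_of_mem _ (Perm.mem_support.mpr (hg _))
  set y := cycleRep g x
  refine le_antisymm (not_lt.mp fun h => hx (heq _ (mem_filter.mpr ⟨rep_mem x, h⟩)))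
    (not_lt.mp fun h => ?_)
  have rep_raised : cycleRep g (f y) ∈ raisedReps g rank f := by
    refine mem_filter.mpr ⟨rep_mem _, ?_⟩
    rw [(hrank _ _).mpr (sameCycle_cycleRep g (f y))]
    refine h.trans_eq ((hrank _ _).mpr ?_)
    rw [← sameCycle_apply_apply_iff hfg, hf]
    exact (sameCycle_cycleRep g _).symm
  have eq_at : f (f y) = f' (f y) :=
    apply_eq_apply_of_sameCycle hfg hfg' (sameCycle_cycleRep g _) (heq _ rep_raised)
  rw [hf, ← hf'.injective.eq_iff, hf'] at eq_at
  exact hx eq_at.symm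

theorem eq_of_raisedReps_eq (hrank : ∀ x y, rank x = rank y ↔ g.SameCycle x y)
    (hg : ∀ x, g x ≠ x) {f f' : Perm α} (hf : IsPerfectMatching f) (hf' : IsPerfectMatching f')
    (hfg : Commute f g) (hfg' : Commute f' g) (hT : raisedReps g rank f = raisedReps g rank f')
    (heq : ∀ x ∈ raisedReps g rank f, f x = f' x) : f = f' := by
  by_contra hne
  obtain ⟨x, hx⟩ : ∃ x, f x ≠ f' x := by simpa [Equiv.ext_iff] using hne
  set y := cycleRep g x
  have ne : f y ≠ f' y := fun h =>
    hx (apply_eq_apply_of_sameCycle hfg hfg' (sameCycle_cycleRep g x) h)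
  obtain ⟨i, hi⟩ := ((hrank _ _).mp
    (rank_apply_eq_of_ne hrank hg hf.1 hf'.1 hfg hfg' heq ne)).symm
  obtain ⟨j, hj⟩ := ((hrank _ _).mp (rank_apply_eq_of_ne hrank hg hf'.1 hf.1 hfg' hfg
    (fun z hz => (heq z (hT ▸ hz)).symm) ne.symm)).symm
  have zpow_two_mul {f : Perm α} (hf : Involutive f) (hfg : Commute f g) {i : ℤ}
      (hi : (g ^ i) y = f y) : (g ^ (2 * i)) y = y := by
    rw [two_mul, zpow_add, Perm.mul_apply, hi, ← Perm.mul_apply, ← (hfg.zpow_right i).eq,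
      Perm.mul_apply, hi, hf]
  exact ne (hi.symm.trans ((zpow_apply_eq_zpow_apply (zpow_two_mul hf.1 hfg hi)
    (hi.trans_ne (hf.2 y)) (zpow_two_mul hf'.1 hfg' hj) (hj.trans_ne (hf'.2 y))).trans hj))

theorem commutingMatchingCount_le_of_forall_apply_ne (hg : ∀ x, g x ≠ x) :
    commutingMatchingCount g ≤ 2 ^ Multiset.card g.cycleType *
      (Fintype.card α + 1) ^ (Multiset.card g.cycleType / 2) := by
  let rank (x : α) : Fin (Fintype.card α) := Fintype.equivFin α (cycleRep g x)
  have hrank (x y : α) : rank x = rank y ↔ g.SameCycle x y :=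
    (Fintype.equivFin α).apply_eq_iff_eq.trans cycleRep_eq_iff
  let S : Finset (Finset α) :=
    {T ∈ (cycleReps g).powerset | #T ≤ Multiset.card g.cycleType / 2}
  have raisedReps_mem {f : Perm α} (hf : IsPerfectMatching f) (hfg : Commute f g) :
      raisedReps g rank f ∈ S :=
    mem_filter.mpr ⟨mem_powerset.mpr (filter_subset _ _), by
      have := two_mul_card_raisedReps_le hrank hf.1 hfg hg
      lia⟩
  let encode (f : {f // IsPerfectMatching f ∧ Commute f g}) : Σ T : S, (T.1 → α) :=
    ⟨⟨raisedReps g rank f, raisedReps_mem f.2.1 f.2.2⟩, fun x => f.1 x⟩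
  have encode_injective : Injective encode := by
    rintro ⟨f, hf, hfg⟩ ⟨f', hf', hfg'⟩ h
    have hT : raisedReps g rank f = raisedReps g rank f' := congrArg (·.1.1) h
    have apply_eq : ∀ {p q : Σ T : S, (T.1 → α)}, p = q →
        ∀ x (hp : x ∈ p.1.1) (hq : x ∈ q.1.1), p.2 ⟨x, hp⟩ = q.2 ⟨x, hq⟩ := by
      rintro _ _ rfl _ _ _
      rfl
    have heq (x : α) (hx : x ∈ raisedReps g rank f) : f x = f' x :=
      apply_eq h x hx (hT ▸ hx : x ∈ raisedReps g rank f')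
    exact Subtype.ext (eq_of_raisedReps_eq hrank hg hf hf' hfg hfg' hT heq)
  have card_S_le : #S ≤ 2 ^ Multiset.card g.cycleType := by
    rw [← card_cycleReps, ← card_powerset]
    exact card_filter_le _ _
  have card_fun_le (T : S) : Nat.card (T.1 → α) ≤
      (Fintype.card α + 1) ^ (Multiset.card g.cycleType / 2) := by
    rw [Nat.card_fun, Nat.card_eq_fintype_card, Nat.card_eq_finsetCard]
    exact (Nat.pow_le_pow_left (Nat.le_succ _) _).trans
      (Nat.pow_le_pow_right (Nat.succ_pos _) (mem_filter.mp T.2).2)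
  calc commutingMatchingCount g ≤ ∑ T : S, Nat.card (T.1 → α) :=
        (Nat.card_le_card_of_injective encode encode_injective).trans_eq Nat.card_sigma
    _ ≤ #S * (Fintype.card α + 1) ^ (Multiset.card g.cycleType / 2) := by
        simpa using sum_le_card_nsmul univ _ _ fun T _ => card_fun_le T
    _ ≤ _ := Nat.mul_le_mul_right _ card_S_le

theorem cycleType_movedPerm (g : Perm α) : (movedPerm g).cycleType = g.cycleType := by
  rw [← Perm.cycleType_ofSubtype, movedPerm, Perm.ofSubtype_subtypePerm]
  exact fun _ => id

theorem commutingMatchingCount_le (g : Perm α) :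
    commutingMatchingCount g ≤ 2 ^ Multiset.card g.cycleType *
      (#g.support + 1) ^ (Multiset.card g.cycleType / 2) *
        matchingCount (Fintype.card α - #g.support) := by
  have le := commutingMatchingCount_le_of_forall_apply_ne (g := movedPerm g)
    fun x h => x.2 (congrArg Subtype.val h)
  rw [cycleType_movedPerm, card_moved] at le
  rw [commutingMatchingCount_eq_mul_movedPerm, card_fixed, mul_comm]
  exact Nat.mul_le_mul_right _ le

end FixedPointFree

section ProdShear

variable {α ι : Type*} (σ : Perm α) (τ : α → Perm ι)

theorem sameCycle_prodShear_of_sameCycle [Finite α] {v w : α} (h : σ.SameCycle v w) (i : ι) :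
    ∃ j, Perm.SameCycle (σ.prodShear τ) (v, i) (w, j) := by
  obtain ⟨n, rfl⟩ := h.exists_nat_pow_eq
  have fst_apply : ((σ.prodShear τ)^[n] (v, i)).1 = σ^[n] v :=
    (show Semiconj Prod.fst (σ.prodShear τ) σ from fun _ => rfl).iterate_right n (v, i)
  rw [Perm.iterate_eq_pow, Perm.iterate_eq_pow] at fst_apply
  exact ⟨_, n, Prod.ext fst_apply rfl⟩

theorem sameCycle_prodShear_of_apply_eq [Finite ι] {v : α} (hv : σ v = v) {i j : ι}
    (h : (τ v).SameCycle i j) : Perm.SameCycle (σ.prodShear τ) (v, i) (v, j) := by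
  obtain ⟨n, rfl⟩ := h.exists_nat_pow_eq
  have semiconj : Semiconj (Prod.mk v) (τ v) (σ.prodShear τ) := fun i => Prod.ext hv.symm rfl
  have iterate_apply := semiconj.iterate_right n i
  rw [Perm.iterate_eq_pow, Perm.iterate_eq_pow] at iterate_apply
  exact ⟨n, iterate_apply.symm⟩

variable [Fintype α] [DecidableEq α] [Fintype ι] [DecidableEq ι]

theorem card_support_prodShear :
    #(Perm.support (σ.prodShear τ)) =
      Fintype.card ι * #σ.support + ∑ v with σ v = v, #(τ v).support := by
  have card_fiber (v : α) : ∑ i, (if (σ.prodShear τ) (v, i) ≠ (v, i) then 1 else 0) =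
      if σ v = v then #(τ v).support else Fintype.card ι := by
    by_cases hv : σ v = v
    · simp only [prodShear_apply, hv, ne_eq, Prod.mk.injEq, true_and, if_true, ← card_filter]
      rfl
    · simp [hv]
  rw [Perm.support, card_filter, Fintype.sum_prod_type, sum_congr rfl fun v _ => card_fiber v,
    sum_ite, sum_const, smul_eq_mul, mul_comm, add_comm]
  rfl

theorem card_cycleType_prodShear_le :
    Multiset.card (Perm.cycleType (σ.prodShear τ)) ≤
      Fintype.card ι * Multiset.card σ.cycleType +
        ∑ v with σ v = v, Multiset.card (τ v).cycleType := by
  let reps : Finset (α × ι) := cycleReps σ ×ˢ univ ∪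
    ({v | σ v = v} : Finset α).biUnion fun v => (cycleReps (τ v)).image (Prod.mk v)
  have card_reps : #reps ≤ Fintype.card ι * Multiset.card σ.cycleType +
      ∑ v with σ v = v, Multiset.card (τ v).cycleType := by
    refine (card_union_le _ _).trans (add_le_add ?_ (card_biUnion_le.trans ?_))
    · rw [card_product, card_cycleReps, card_univ, mul_comm]
    · exact sum_le_sum fun v _ => card_image_le.trans_eq (card_cycleReps _)
  refine (card_cycleType_le_of_forall_exists_sameCycle reps fun ⟨v, i⟩ hx => ?_).trans card_reps
  by_cases hv : σ v = v
  · have hi : i ∈ (τ v).support :=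
      Perm.mem_support.mpr fun hi => Perm.mem_support.mp hx (Prod.ext hv hi)
    exact ⟨(v, cycleRep (τ v) i),
      mem_union_right _ (mem_biUnion.mpr ⟨v, mem_filter_univ v |>.mpr hv,
        mem_image_of_mem _ (mem_image_of_mem _ hi)⟩),
      sameCycle_prodShear_of_apply_eq σ τ hv (sameCycle_cycleRep _ i).symm⟩
  · obtain ⟨j, hj⟩ :=
      sameCycle_prodShear_of_sameCycle σ τ (sameCycle_cycleRep σ v).symm i
    exact ⟨(cycleRep σ v, j), mem_union_left _ (mem_product.mpr
      ⟨mem_image_of_mem _ (Perm.mem_support.mpr hv), mem_univ j⟩), hj⟩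

/-- The fixed points of `σ` at which `τ` permutes the fibre by a permutation moving `k` points. -/
def fixedWithSupport (k : ℕ) : Finset α :=
  {v | σ v = v ∧ #(τ v).support = k}

theorem sum_fixed_eq_of_fin_three {σ : Perm α} {τ : α → Perm (Fin 3)} {F : Perm (Fin 3) → ℕ}
    {b c : ℕ} (h0 : F 1 = 0) (h2 : ∀ ρ : Perm (Fin 3), #ρ.support = 2 → F ρ = b)
    (h3 : ∀ ρ : Perm (Fin 3), #ρ.support = 3 → F ρ = c) :
    ∑ v with σ v = v, F (τ v) = b * #(fixedWithSupport σ τ 2) + c * #(fixedWithSupport σ τ 3) := by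
  have value_eq (ρ : Perm (Fin 3)) :
      F ρ = (if #ρ.support = 2 then b else 0) + if #ρ.support = 3 then c else 0 := by
    have cases : ∀ ρ : Perm (Fin 3), ρ = 1 ∨ #ρ.support = 2 ∨ #ρ.support = 3 := by decide
    rcases cases ρ with rfl | h | h
    · simp [h0]
    · simp [h, h2]
    · simp [h, h3]
  simp_rw [value_eq, sum_add_distrib, ← sum_filter, filter_filter, sum_const, smul_eq_mul, mul_comm]
  rfl

theorem card_support_prodShear_fin_three (σ : Perm α) (τ : α → Perm (Fin 3)) :
    #(Perm.support (σ.prodShear τ)) =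
      3 * #σ.support + 2 * #(fixedWithSupport σ τ 2) + 3 * #(fixedWithSupport σ τ 3) := by
  rw [card_support_prodShear, Fintype.card_fin, add_assoc, sum_fixed_eq_of_fin_three
    (F := fun ρ => #ρ.support) (by simp) (fun _ h => h) fun _ h => h]

theorem card_cycleType_prodShear_fin_three_le (σ : Perm α) (τ : α → Perm (Fin 3)) :
    Multiset.card (Perm.cycleType (σ.prodShear τ)) ≤ 3 * Multiset.card σ.cycleType +
      #(fixedWithSupport σ τ 2) + #(fixedWithSupport σ τ 3) := by
  have := card_cycleType_prodShear_le σ τ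
  have h2 : ∀ ρ : Perm (Fin 3), #ρ.support = 2 → Multiset.card ρ.cycleType = 1 := fun _ h =>
    Perm.card_cycleType_eq_one.mpr (Perm.card_support_eq_two.mp h).isCycle
  have h3 : ∀ ρ : Perm (Fin 3), #ρ.support = 3 → Multiset.card ρ.cycleType = 1 := fun _ h =>
    Perm.card_cycleType_eq_one.mpr (card_support_eq_three_iff.mp h).isCycle
  rwa [Fintype.card_fin, sum_fixed_eq_of_fin_three (F := fun ρ => Multiset.card ρ.cycleType)
    (by simp) h2 h3, one_mul, one_mul, ← add_assoc] at this

theorem commutingMatchingCount_prodShear_le {N : ℕ} (σ : Perm (Fin N)) (τ : Fin N → Perm (Fin 3))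
    {s j a b : ℕ} (hs : #σ.support = s) (hj : Multiset.card σ.cycleType = j)
    (ha : #(fixedWithSupport σ τ 2) = a) (hb : #(fixedWithSupport σ τ 3) = b) :
    commutingMatchingCount (σ.prodShear τ) ≤ 2 ^ (3 * j + a + b) *
      (3 * s + 2 * a + 3 * b + 1) ^ ((3 * j + a + b) / 2) *
        matchingCount (3 * N - (3 * s + 2 * a + 3 * b)) := by
  have le := commutingMatchingCount_le (σ.prodShear τ)
  have card_le := card_cycleType_prodShear_fin_three_le σ τ
  rw [card_support_prodShear_fin_three, Fintype.card_prod, Fintype.card_fin, Fintype.card_fin,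
    mul_comm N, hs, ha, hb] at le
  rw [hj, ha, hb] at card_le
  refine le.trans (Nat.mul_le_mul_right _ (Nat.mul_le_mul ?_ ?_))
  · exact Nat.pow_le_pow_right two_pos card_le
  · exact Nat.pow_le_pow_right (Nat.succ_pos _) (Nat.div_le_div_right card_le)

end ProdShear

section CountingByCycles

attribute [local instance] arrowAction

variable {α : Type*} [Fintype α]

theorem card_orbits_colorings_le (Y : Type*) [Fintype Y] :
    Nat.card (MulAction.orbitRel.Quotient (Perm α) (α → Y)) ≤
      (Fintype.card Y + Fintype.card α - 1).choose (Fintype.card α) := by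
  classical
  let values (c : α → Y) : Sym Y (Fintype.card α) :=
    ⟨univ.val.map c, by rw [Multiset.card_map, card_val, card_univ]⟩
  have mem_orbit {c c' : α → Y} (h : values c = values c') : c ∈ MulAction.orbit (Perm α) c' := by
    have count_eq (y : Y) : Nat.card {x // c' x = y} = Nat.card {x // c x = y} := by
      have := congrArg (fun m => Multiset.count y m.1) h
      simp only [values, Multiset.count_map] at this
      rw [Nat.card_eq_fintype_card, Nat.card_eq_fintype_card, Fintype.card_subtype,
        Fintype.card_subtype]
      simp only [eq_comm (b := y)]
      exact this.symm
    obtain ⟨e, he⟩ := exists_equiv_of_card_fiber_eq count_eq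
    exact ⟨e, funext fun x => (he _).symm.trans (congrArg c (e.apply_symm_apply x))⟩
  rw [← Sym.card_sym_eq_choose, ← Nat.card_eq_fintype_card]
  refine Nat.card_le_card_of_injective (fun q => values q.out) fun q q' h => ?_
  rw [← q.out_eq, ← q'.out_eq]
  exact Quotient.sound (mem_orbit h)

variable [DecidableEq α]

theorem card_derangements_mul_factorial_le (j : ℕ) :
    #{σ : Perm α | (∀ x, σ x ≠ x) ∧ Multiset.card σ.cycleType = j} * j ! ≤
      4 ^ Fintype.card α * (Fintype.card α)! := by
  set S : Finset (Perm α) := {σ | (∀ x, σ x ≠ x) ∧ Multiset.card σ.cycleType = j}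
  rcases S.eq_empty_or_nonempty with h | ⟨σ₀, hσ₀⟩
  · simp [h]
  have j_le : j ≤ Fintype.card α := by
    rw [← (mem_filter.mp hσ₀).2.2, ← card_cycleReps]
    exact card_le_univ _
  have card_fixedBy {σ : Perm α} (hσ : σ ∈ S) :
      Nat.card (MulAction.fixedBy (α → Fin (j + 1)) σ) = (j + 1) ^ j := by
    obtain ⟨hσx, hσj⟩ := (mem_filter.mp hσ).2
    have mem_iff (c : α → Fin (j + 1)) : c ∈ MulAction.fixedBy (α → Fin (j + 1)) σ ↔
        (∀ x, c (σ x) = c x) ∧ ∀ x, σ x = x → c x = 0 := by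
      rw [and_iff_left fun x hx => absurd hx (hσx x)]
      refine ⟨fun h x => ?_, fun h => funext fun x => ?_⟩
      · exact (congrFun h (σ x)).symm.trans (congrArg c (σ.symm_apply_apply x))
      · exact (h _).symm.trans (congrArg c (σ.apply_symm_apply x))
    rw [Nat.card_congr (subtypeEquivRight mem_iff), card_invariant_colorings, Nat.card_fin, hσj]
  have choose_le : (Fintype.card (Fin (j + 1)) + Fintype.card α - 1).choose (Fintype.card α) ≤
      4 ^ Fintype.card α := by
    rw [Fintype.card_fin]
    calc _ ≤ 2 ^ (j + 1 + Fintype.card α - 1) := Nat.choose_le_two_pow _ _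
      _ ≤ 2 ^ (2 * Fintype.card α) := Nat.pow_le_pow_right two_pos (by lia)
      _ = 4 ^ Fintype.card α := pow_mul 2 2 _
  calc #S * j ! ≤ #S * (j + 1) ^ j :=
        Nat.mul_le_mul_left _ ((Nat.factorial_le_pow j).trans (Nat.pow_le_pow_left j.le_succ j))
    _ = ∑ σ ∈ S, Nat.card (MulAction.fixedBy (α → Fin (j + 1)) σ) := by
        rw [sum_congr rfl fun σ hσ => card_fixedBy hσ, sum_const, smul_eq_mul]
    _ ≤ ∑ σ : Perm α, Nat.card (MulAction.fixedBy (α → Fin (j + 1)) σ) :=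
        sum_le_sum_of_subset (subset_univ _)
    _ = Nat.card (MulAction.orbitRel.Quotient (Perm α) (α → Fin (j + 1))) * Nat.card (Perm α) :=
        sum_card_fixedBy _ _
    _ ≤ 4 ^ Fintype.card α * (Fintype.card α)! := by
        rw [Nat.card_eq_fintype_card (α := Perm α), Fintype.card_perm]
        exact Nat.mul_le_mul_right _ ((card_orbits_colorings_le _).trans choose_le)

theorem card_filter_support_eq_le (S : Finset α) (j : ℕ) :
    #{σ : Perm α | σ.support = S ∧ Multiset.card σ.cycleType = j} ≤
      #{σ : Perm S | (∀ x, σ x ≠ x) ∧ Multiset.card σ.cycleType = j} := by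
  have ofSubtype_restrict {σ : Perm α} (hσ : σ.support = S) :
      ∃ ρ : Perm S, Perm.ofSubtype ρ = σ := by
    subst hσ
    exact ⟨σ.subtypePerm fun x => Perm.apply_mem_support, Perm.ofSubtype_subtypePerm _
      fun x => Perm.mem_support.mpr⟩
  refine card_le_card_of_surjOn Perm.ofSubtype fun σ hσ => ?_
  obtain ⟨hσS, hσj⟩ := (mem_filter.mp hσ).2
  obtain ⟨ρ, rfl⟩ := ofSubtype_restrict hσS
  rw [Perm.cycleType_ofSubtype] at hσj
  refine ⟨ρ, mem_filter_univ ρ |>.mpr ⟨fun x hx => ?_, hσj⟩, rfl⟩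
  have x_mem : (x : α) ∈ (Perm.ofSubtype ρ).support := hσS.symm ▸ x.2
  exact Perm.mem_support.mp x_mem (by rw [Perm.ofSubtype_apply_coe, hx])

theorem card_support_card_cycleType_mul_factorial_le (s j : ℕ) :
    #{σ : Perm α | #σ.support = s ∧ Multiset.card σ.cycleType = j} * j ! ≤
      (4 * Fintype.card α) ^ s := by
  have card_le : #{σ : Perm α | #σ.support = s ∧ Multiset.card σ.cycleType = j} ≤
      ∑ S ∈ powersetCard s (univ : Finset α),
        #{σ : Perm α | σ.support = S ∧ Multiset.card σ.cycleType = j} := by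
    refine (card_le_card fun σ hσ => ?_).trans card_biUnion_le
    obtain ⟨hσs, hσj⟩ := (mem_filter.mp hσ).2
    exact mem_biUnion.mpr ⟨σ.support, mem_powersetCard_univ.mpr hσs,
      mem_filter_univ σ |>.mpr ⟨rfl, hσj⟩⟩
  have term_le {S : Finset α} (hS : S ∈ powersetCard s univ) :
      #{σ : Perm α | σ.support = S ∧ Multiset.card σ.cycleType = j} * j ! ≤ 4 ^ s * s ! := by
    have := card_derangements_mul_factorial_le (α := S) j
    rw [Fintype.card_coe, mem_powersetCard_univ.mp hS] at this
    exact (Nat.mul_le_mul_right _ (card_filter_support_eq_le S j)).trans this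
  calc _ ≤ ∑ S ∈ powersetCard s (univ : Finset α), 4 ^ s * s ! := by
        refine (Nat.mul_le_mul_right _ card_le).trans ?_
        rw [sum_mul]
        exact sum_le_sum fun S hS => term_le hS
    _ = 4 ^ s * (Fintype.card α).descFactorial s := by
        rw [sum_const, card_powersetCard, card_univ, smul_eq_mul,
          Nat.descFactorial_eq_factorial_mul_choose]
        ring
    _ ≤ (4 * Fintype.card α) ^ s := by
        rw [mul_pow]
        exact Nat.mul_le_mul_left _ (Nat.descFactorial_le_pow _ _)

end CountingByCycles

section CountingShears

variable {α : Type*} [Fintype α] [DecidableEq α]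

theorem card_functions_eq_off {β : Type*} [Fintype β] [DecidableEq β] (S : Finset α) (c : β) :
    #{τ : α → β | ∀ v ∉ S, τ v = c} = Fintype.card β ^ #S := by
  have eq_piFinset : ({τ : α → β | ∀ v ∉ S, τ v = c} : Finset (α → β)) =
      Fintype.piFinset fun v => if v ∈ S then univ else {c} := by
    ext τ
    simp only [mem_filter_univ, Fintype.mem_piFinset]
    refine forall_congr' fun v => ?_
    by_cases hv : v ∈ S <;> simp [hv]
  rw [eq_piFinset, Fintype.card_piFinset]
  simp only [apply_ite card, card_univ, card_singleton, prod_ite_mem, univ_inter, prod_const]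

theorem apply_eq_one_of_notMem_fixedWithSupport {σ : Perm α} {τ : α → Perm (Fin 3)} {v : α}
    (hv : σ v = v) (h2 : v ∉ fixedWithSupport σ τ 2) (h3 : v ∉ fixedWithSupport σ τ 3) :
    τ v = 1 := by
  have cases : ∀ ρ : Perm (Fin 3), #ρ.support ≠ 2 → #ρ.support ≠ 3 → ρ = 1 := by decide
  exact cases _ (fun h => h2 (mem_filter_univ v |>.mpr ⟨hv, h⟩))
    fun h => h3 (mem_filter_univ v |>.mpr ⟨hv, h⟩)

theorem card_fixedWithSupport_mul_factorial_le (σ : Perm α) (a b : ℕ) :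
    #{τ : α → Perm (Fin 3) | #(fixedWithSupport σ τ 2) = a ∧ #(fixedWithSupport σ τ 3) = b} *
      (a ! * b !) ≤ 6 ^ (#σ.support + a + b) * Fintype.card α ^ (a + b) := by
  let P (a : ℕ) : Finset (Finset α) := powersetCard a univ
  have subset : ({τ | #(fixedWithSupport σ τ 2) = a ∧ #(fixedWithSupport σ τ 3) = b} :
      Finset (α → Perm (Fin 3))) ⊆
        (P a ×ˢ P b).biUnion fun S => {τ | ∀ v ∉ σ.support ∪ S.1 ∪ S.2, τ v = 1} := by
    intro τ hτ
    obtain ⟨ha, hb⟩ := (mem_filter.mp hτ).2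
    refine mem_biUnion.mpr ⟨(fixedWithSupport σ τ 2, fixedWithSupport σ τ 3), mem_product.mpr
      ⟨mem_powersetCard_univ.mpr ha, mem_powersetCard_univ.mpr hb⟩,
      mem_filter_univ τ |>.mpr fun v hv => ?_⟩
    simp only [mem_union, not_or, Perm.notMem_support] at hv
    exact apply_eq_one_of_notMem_fixedWithSupport hv.1.1 hv.1.2 hv.2
  have term_le {S : Finset α × Finset α} (hS : S ∈ P a ×ˢ P b) :
      #{τ : α → Perm (Fin 3) | ∀ v ∉ σ.support ∪ S.1 ∪ S.2, τ v = 1} ≤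
        6 ^ (#σ.support + a + b) := by
    obtain ⟨ha, hb⟩ := mem_product.mp hS
    rw [card_functions_eq_off, ← mem_powersetCard_univ.mp ha, ← mem_powersetCard_univ.mp hb]
    exact Nat.pow_le_pow_right (by decide)
      ((card_union_le _ _).trans (Nat.add_le_add_right (card_union_le _ _) _))
  have choose_le (a : ℕ) : (Fintype.card α).choose a * a ! ≤ Fintype.card α ^ a := by
    rw [mul_comm, ← Nat.descFactorial_eq_factorial_mul_choose]
    exact Nat.descFactorial_le_pow _ _
  calc _ ≤ (∑ _ ∈ P a ×ˢ P b, 6 ^ (#σ.support + a + b)) * (a ! * b !) :=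
        Nat.mul_le_mul_right _ ((card_le_card subset).trans
          (card_biUnion_le.trans (sum_le_sum fun _ => term_le)))
    _ = 6 ^ (#σ.support + a + b) * (((Fintype.card α).choose a * a !) *
          ((Fintype.card α).choose b * b !)) := by
        rw [sum_const, card_product, card_powersetCard, card_powersetCard, card_univ, smul_eq_mul]
        ring
    _ ≤ _ := by
        rw [pow_add _ a b]
        exact Nat.mul_le_mul_left _ (Nat.mul_le_mul (choose_le a) (choose_le b))

/-- The parameters governing the bound for `commutingMatchingCount (σ.prodShear τ)`: the numbers of
points moved by `σ`, of nontrivial cycles of `σ`, and of the fixed points of `σ` at which `τ` is a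
transposition, respectively a `3`-cycle. -/
def shearType (g : Perm α × (α → Perm (Fin 3))) : ℕ × ℕ × ℕ × ℕ :=
  (#g.1.support, Multiset.card g.1.cycleType, #(fixedWithSupport g.1 g.2 2),
    #(fixedWithSupport g.1 g.2 3))

theorem card_shearType_mul_factorial_le (s j a b : ℕ) :
    #{g : Perm α × (α → Perm (Fin 3)) | shearType g = (s, j, a, b)} * (j ! * (a ! * b !)) ≤
      (24 * Fintype.card α) ^ (s + a + b) := by
  set n := Fintype.card α
  set shears : Finset (Perm α × (α → Perm (Fin 3))) := {g | shearType g = (s, j, a, b)}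
  let perms : Finset (Perm α) := {σ | #σ.support = s ∧ Multiset.card σ.cycleType = j}
  have of_mem {g : Perm α × (α → Perm (Fin 3))} (hg : g ∈ shears) : g.1 ∈ perms ∧
      #(fixedWithSupport g.1 g.2 2) = a ∧ #(fixedWithSupport g.1 g.2 3) = b := by
    have type_eq := (mem_filter.mp hg).2
    simp only [shearType, Prod.mk.injEq] at type_eq
    exact ⟨mem_filter_univ _ |>.mpr ⟨type_eq.1, type_eq.2.1⟩, type_eq.2.2⟩
  have fiber_le {σ : Perm α} (hσ : σ ∈ perms) : #{g ∈ shears | g.1 = σ} ≤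
      6 ^ (s + a + b) * n ^ (a + b) / (a ! * b !) := by
    have count := card_fixedWithSupport_mul_factorial_le σ a b
    rw [(mem_filter.mp hσ).2.1, ← Nat.le_div_iff_mul_le (by positivity)] at count
    refine (card_le_card_of_injOn Prod.snd (fun g hg => ?_) fun g hg g' hg' h => ?_).trans count
    · obtain ⟨g_mem, rfl⟩ := mem_filter.mp hg
      exact mem_filter_univ _ |>.mpr (of_mem g_mem).2
    · exact Prod.ext ((mem_filter.mp hg).2.trans (mem_filter.mp hg').2.symm) h
  have card_le := card_le_mul_card_image_of_maps_to (fun g hg => (of_mem hg).1) _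
    fun σ hσ => fiber_le hσ
  calc _ ≤ 6 ^ (s + a + b) * n ^ (a + b) / (a ! * b !) * #perms * (j ! * (a ! * b !)) :=
        Nat.mul_le_mul_right _ card_le
    _ = 6 ^ (s + a + b) * n ^ (a + b) / (a ! * b !) * (a ! * b !) * (#perms * j !) := by ring
    _ ≤ 6 ^ (s + a + b) * n ^ (a + b) * (4 * n) ^ s :=
        Nat.mul_le_mul (Nat.div_mul_le_self _ _)
          (card_support_card_cycleType_mul_factorial_le s j)
    _ ≤ 6 ^ (s + a + b) * (4 * n) ^ (a + b) * (4 * n) ^ s := by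
        gcongr
        lia
    _ = (24 * n) ^ (s + a + b) := by
        rw [show 24 * n = 6 * (4 * n) by ring, mul_pow 6, mul_assoc, ← pow_add]
        ring_nf

end CountingShears

section MatchingCountEstimates

theorem add_one_pow_le_three_mul_pow {x t : ℕ} (h : t ≤ x) : (x + 1) ^ t ≤ 3 * x ^ t := by
  rcases x.eq_zero_or_pos with rfl | hx
  · simp [Nat.le_zero.mp h]
  have x_pos : (0 : ℝ) < x := Nat.cast_pos.mpr hx
  have ratio_le : (1 + 1 / (x : ℝ)) ^ t ≤ 3 := calc
    (1 + 1 / (x : ℝ)) ^ t ≤ Real.exp (1 / x) ^ t := by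
        gcongr
        rw [add_comm]
        exact Real.add_one_le_exp _
    _ = Real.exp (t / x) := by rw [← Real.exp_nat_mul, mul_one_div]
    _ ≤ Real.exp 1 := Real.exp_le_exp.mpr ((div_le_one x_pos).mpr (Nat.cast_le.mpr h))
    _ ≤ 3 := Real.exp_one_lt_three.le
  have real_le : ((x : ℝ) + 1) ^ t ≤ 3 * (x : ℝ) ^ t := by
    rw [show (x : ℝ) + 1 = (1 + 1 / x) * x by field_simp, mul_pow]
    gcongr
  exact_mod_cast real_le

theorem matchingCount_mul_pow_le (n t : ℕ) :
    matchingCount (2 * n) * (n + t) ^ t ≤ 3 ^ t * matchingCount (2 * (n + t)) := by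
  induction t with
  | zero => simp
  | succ t ih =>
    calc matchingCount (2 * n) * (n + t + 1) ^ (t + 1)
        = matchingCount (2 * n) * (n + t + 1) ^ t * (n + t + 1) := by ring
      _ ≤ matchingCount (2 * n) * (3 * (n + t) ^ t) * (2 * (n + t) + 1) := by
          gcongr
          · exact add_one_pow_le_three_mul_pow (Nat.le_add_left _ _)
          · lia
      _ = 3 * (matchingCount (2 * n) * (n + t) ^ t) * (2 * (n + t) + 1) := by ring
      _ ≤ 3 * (3 ^ t * matchingCount (2 * (n + t))) * (2 * (n + t) + 1) := by gcongr
      _ = 3 ^ (t + 1) * matchingCount (2 * (n + (t + 1))) := by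
          rw [← add_assoc, mul_add_one 2 (n + t), matchingCount_two_mul_add_two]
          ring

theorem matchingCount_sub_mul_sqrt_pow_le {N r : ℕ} (hN : Even N) (hr : r ≤ 3 * N) :
    (matchingCount (3 * N - r) : ℝ) * √N ^ r ≤ 2 ^ r * matchingCount (3 * N) := by
  obtain ⟨k, rfl⟩ := hN.two_dvd
  by_cases hr' : Even r
  swap
  · rw [matchingCount_of_not_even fun h => hr' (by grind), Nat.cast_zero, zero_mul]
    positivity
  obtain ⟨t, rfl⟩ := hr'.two_dvd
  have le := matchingCount_mul_pow_le (3 * k - t) t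
  rw [Nat.sub_add_cancel (by lia), Nat.mul_sub, ← mul_assoc, mul_comm 2 3, mul_assoc] at le
  rw [mul_pow 3 k, mul_left_comm] at le
  have le' := Nat.le_of_mul_le_mul_left le (by positivity)
  rw [pow_mul, pow_mul, Real.sq_sqrt (Nat.cast_nonneg _)]
  push_cast
  have real_le : (matchingCount (3 * (2 * k) - 2 * t) : ℝ) * (k : ℝ) ^ t ≤
      matchingCount (3 * (2 * k)) := by exact_mod_cast le'
  calc _ = 2 ^ t * ((matchingCount (3 * (2 * k) - 2 * t) : ℝ) * (k : ℝ) ^ t) := by ring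
    _ ≤ 2 ^ t * matchingCount (3 * (2 * k)) := by gcongr
    _ ≤ (2 ^ 2) ^ t * matchingCount (3 * (2 * k)) := by
        gcongr
        norm_num

theorem pow_le_sqrt_factorial_mul_exp (w : ℝ) (n : ℕ) :
    w ^ n ≤ √(n ! : ℝ) * Real.exp (w ^ 2 / 2) := by
  have sq_le : (w ^ n) ^ 2 ≤ (√(n ! : ℝ) * Real.exp (w ^ 2 / 2)) ^ 2 := by
    rw [mul_pow, Real.sq_sqrt (by positivity), ← Real.exp_nat_mul, ← pow_mul, mul_comm n, pow_mul,
      Nat.cast_ofNat, mul_div_cancel₀ _ two_ne_zero, ← div_le_iff₀' (by positivity)]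
    exact Real.pow_div_factorial_le_exp _ (sq_nonneg w) n
  exact le_of_sq_le_sq sq_le (by positivity)

end MatchingCountEstimates

section ShearTypeEstimate

/-- The base of the exponential factor in `contribution_mul_le`. -/
noncomputable def growthConstant : ℝ :=
  24 * 4 * 8 * Real.exp 8

theorem support_pow_le (s j a b : ℕ) :
    ((3 * s + 2 * a + 3 * b + 1 : ℕ) : ℝ) ^ ((3 * j + a + b) / 2) ≤
      √(j ! : ℝ) ^ 3 * √(a ! : ℝ) * √(b ! : ℝ) * (Real.exp 3 * Real.exp 8 ^ (s + a + b)) := by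
  set r := 3 * s + 2 * a + 3 * b
  set w := √((r + 1 : ℕ) : ℝ)
  have w_sq : w ^ 2 = (r + 1 : ℕ) := Real.sq_sqrt (Nat.cast_nonneg _)
  have one_le_w : 1 ≤ w := Real.one_le_sqrt.mpr (by simp)
  have exp_le : Real.exp (w ^ 2 / 2) ^ 5 ≤ Real.exp 3 * Real.exp 8 ^ (s + a + b) := by
    rw [← Real.exp_nat_mul, ← Real.exp_nat_mul, ← Real.exp_add, Real.exp_le_exp, w_sq]
    simp only [r]
    push_cast
    have := (Nat.cast_nonneg s : (0 : ℝ) ≤ s)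
    have := (Nat.cast_nonneg a : (0 : ℝ) ≤ a)
    have := (Nat.cast_nonneg b : (0 : ℝ) ≤ b)
    linarith
  have w_pow_le (n : ℕ) := pow_le_sqrt_factorial_mul_exp w n
  calc ((r + 1 : ℕ) : ℝ) ^ ((3 * j + a + b) / 2) = w ^ (2 * ((3 * j + a + b) / 2)) := by
        rw [pow_mul, w_sq]
    _ ≤ w ^ (3 * j + a + b) := pow_le_pow_right₀ one_le_w (Nat.mul_div_le _ 2)
    _ = (w ^ j) ^ 3 * w ^ a * w ^ b := by ring
    _ ≤ (√(j ! : ℝ) * Real.exp (w ^ 2 / 2)) ^ 3 * (√(a ! : ℝ) * Real.exp (w ^ 2 / 2)) *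
          (√(b ! : ℝ) * Real.exp (w ^ 2 / 2)) := by
        gcongr <;> exact w_pow_le _
    _ = √(j ! : ℝ) ^ 3 * √(a ! : ℝ) * √(b ! : ℝ) * Real.exp (w ^ 2 / 2) ^ 5 := by ring
    _ ≤ _ := by gcongr

/-- The contribution to the sum of `commutingMatchingCount` over `S₃ ≀ S_N` of the elements of a
given `shearType`. -/
noncomputable def contribution (N : ℕ) (t : ℕ × ℕ × ℕ × ℕ) : ℕ :=
  ∑ g : Perm (Fin N) × (Fin N → Perm (Fin 3)) with shearType g = t,
    commutingMatchingCount (g.1.prodShear g.2)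

theorem two_mul_le_and_support_le_of_contribution_ne_zero {N s j a b : ℕ}
    (h : contribution N (s, j, a, b) ≠ 0) : 2 * j ≤ s ∧ 3 * s + 2 * a + 3 * b ≤ 3 * N := by
  obtain ⟨g, hg, -⟩ := exists_ne_zero_of_sum_ne_zero h
  have type_eq := (mem_filter.mp hg).2
  simp only [shearType, Prod.mk.injEq] at type_eq
  obtain ⟨rfl, rfl, rfl, rfl⟩ := type_eq
  refine ⟨two_mul_card_cycleType_le _, ?_⟩
  rw [← card_support_prodShear_fin_three]
  refine (card_le_univ _).trans_eq ?_
  rw [Fintype.card_prod, Fintype.card_fin, Fintype.card_fin, mul_comm]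

theorem contribution_mul_factorial_le (N s j a b : ℕ) :
    contribution N (s, j, a, b) * (j ! * (a ! * b !)) ≤ (24 * N) ^ (s + a + b) *
      (2 ^ (3 * j + a + b) * (3 * s + 2 * a + 3 * b + 1) ^ ((3 * j + a + b) / 2) *
        matchingCount (3 * N - (3 * s + 2 * a + 3 * b))) := by
  have count := card_shearType_mul_factorial_le (α := Fin N) s j a b
  rw [Fintype.card_fin] at count
  refine (Nat.mul_le_mul_right _ (sum_le_card_nsmul _ _ _ fun g hg => ?_)).trans
    ((mul_right_comm _ _ _).trans_le (Nat.mul_le_mul_right _ count))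
  have type_eq := (mem_filter.mp hg).2
  simp only [shearType, Prod.mk.injEq] at type_eq
  obtain ⟨hs, hj, ha, hb⟩ := type_eq
  exact commutingMatchingCount_prodShear_le _ _ hs hj ha hb

theorem sqrt_factorial_le_pow {j n : ℕ} {x : ℝ} (hx : 0 ≤ x) (hxn : x ^ 4 = n) (hj : j ≤ n) :
    √(j ! : ℝ) ≤ x ^ (2 * j) := by
  refine Real.sqrt_le_left (by positivity) |>.mpr ?_
  calc (j ! : ℝ) ≤ (n : ℝ) ^ j := by
        exact_mod_cast (Nat.factorial_le_pow j).trans (Nat.pow_le_pow_left hj j)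
    _ = (x ^ (2 * j)) ^ 2 := by rw [← hxn]; ring

theorem growthConstant_pos : 0 < growthConstant := by
  unfold growthConstant
  positivity

theorem contribution_mul_factorial_mul_sqrt_pow_le {N s j a b : ℕ} (hN : Even N) (hj : 2 * j ≤ s)
    (hr : 3 * s + 2 * a + 3 * b ≤ 3 * N) :
    (contribution N (s, j, a, b) : ℝ) * (j ! * (a ! * b !)) * √N ^ (3 * s + 2 * a + 3 * b) ≤
      Real.exp 3 * growthConstant ^ (s + a + b) * matchingCount (3 * N) *
        (N ^ (s + a + b) * (√(j ! : ℝ) ^ 3 * √(a ! : ℝ) * √(b ! : ℝ))) := by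
  set d := s + a + b
  set r := 3 * s + 2 * a + 3 * b
  have count : (contribution N (s, j, a, b) : ℝ) * (j ! * (a ! * b !)) ≤ (24 * N) ^ d *
      (2 ^ (3 * j + a + b) * ((r + 1 : ℕ) : ℝ) ^ ((3 * j + a + b) / 2) *
        matchingCount (3 * N - r)) := by
    exact_mod_cast contribution_mul_factorial_le N s j a b
  have two_pow_q_le : (2 : ℝ) ^ (3 * j + a + b) ≤ 2 ^ (2 * d) :=
    pow_le_pow_right₀ one_le_two (by lia)
  have two_pow_r_le : (2 : ℝ) ^ r ≤ 2 ^ (3 * d) := pow_le_pow_right₀ one_le_two (by lia)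
  calc _ ≤ (24 * N) ^ d * (2 ^ (3 * j + a + b) * ((r + 1 : ℕ) : ℝ) ^ ((3 * j + a + b) / 2) *
          matchingCount (3 * N - r)) * √N ^ r := by gcongr
    _ = (24 * N) ^ d * 2 ^ (3 * j + a + b) * ((r + 1 : ℕ) : ℝ) ^ ((3 * j + a + b) / 2) *
          (matchingCount (3 * N - r) * √N ^ r) := by ring
    _ ≤ (24 * N) ^ d * 2 ^ (2 * d) *
          (√(j ! : ℝ) ^ 3 * √(a ! : ℝ) * √(b ! : ℝ) * (Real.exp 3 * Real.exp 8 ^ d)) *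
          (2 ^ (3 * d) * matchingCount (3 * N)) :=
        mul_le_mul (mul_le_mul (by gcongr) (support_pow_le s j a b) (by positivity) (by positivity))
          ((matchingCount_sub_mul_sqrt_pow_le hN hr).trans (by gcongr)) (by positivity)
          (by positivity)
    _ = _ := by
        simp only [growthConstant, mul_pow, pow_mul]
        norm_num
        ring

theorem contribution_mul_le {N s j a b : ℕ} {x : ℝ} (hN : Even N) (hx : 1 ≤ x) (hxN : x ^ 4 = N) :
    contribution N (s, j, a, b) * (√(a ! : ℝ) * x ^ (s + b)) ≤
      Real.exp 3 * growthConstant ^ (s + a + b) * matchingCount (3 * N) := by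
  have growthConstant_pos := growthConstant_pos
  by_cases hc : contribution N (s, j, a, b) = 0
  · rw [hc, Nat.cast_zero, zero_mul]
    positivity
  obtain ⟨hj, hr⟩ := two_mul_le_and_support_le_of_contribution_ne_zero hc
  have bound := contribution_mul_factorial_mul_sqrt_pow_le hN hj hr
  have sqrt_N : √(N : ℝ) = x ^ 2 := by
    rw [← hxN, show x ^ 4 = (x ^ 2) ^ 2 by ring, Real.sqrt_sq (by positivity)]
  rw [sqrt_N, ← hxN] at bound
  set c : ℝ := (contribution N (s, j, a, b) : ℝ)
  set J := √(j ! : ℝ)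
  set A := √(a ! : ℝ)
  set B := √(b ! : ℝ)
  have J_sq : J ^ 2 = j ! := Real.sq_sqrt (by positivity)
  have A_sq : A ^ 2 = a ! := Real.sq_sqrt (by positivity)
  have B_sq : B ^ 2 = b ! := Real.sq_sqrt (by positivity)
  rw [← J_sq, ← A_sq, ← B_sq] at bound
  have one_le_B : 1 ≤ B := Real.one_le_sqrt.mpr (by exact_mod_cast b.factorial_pos)
  have J_le : J ≤ x ^ s := (sqrt_factorial_le_pow (by positivity) hxN (by lia)).trans
    (pow_le_pow_right₀ hx hj)
  set P := J ^ 2 * A * B * x ^ (4 * (s + a + b)) * x ^ s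
  refine le_of_mul_le_mul_right (a := P) ?_ (by positivity)
  calc c * (A * x ^ (s + b)) * P ≤ c * (A * x ^ (s + b)) * P * (B * x ^ b) :=
        le_mul_of_one_le_right (by positivity)
          (one_le_mul_of_one_le_of_one_le one_le_B (one_le_pow₀ hx))
    _ = c * (J ^ 2 * (A ^ 2 * B ^ 2)) * (x ^ 2) ^ (3 * s + 2 * a + 3 * b) := by
        simp only [P]
        ring
    _ ≤ _ := bound
    _ = Real.exp 3 * growthConstant ^ (s + a + b) * matchingCount (3 * N) *
          (J * (J ^ 2 * A * B * x ^ (4 * (s + a + b)))) := by ring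
    _ ≤ Real.exp 3 * growthConstant ^ (s + a + b) * matchingCount (3 * N) *
          (x ^ s * (J ^ 2 * A * B * x ^ (4 * (s + a + b)))) := by gcongr
    _ = _ := by simp only [P]; ring

end ShearTypeEstimate

section NegligibleShears

theorem one_le_growthConstant : 1 ≤ growthConstant :=
  one_le_mul_of_one_le_of_one_le (by norm_num) (Real.one_le_exp (by norm_num))

theorem growthConstant_pow_le (a : ℕ) :
    growthConstant ^ a ≤ √(a ! : ℝ) * (Real.exp (2 * growthConstant ^ 2) * (1 / 2) ^ a) := by
  have bound := pow_le_sqrt_factorial_mul_exp (2 * growthConstant) a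
  rw [mul_pow, show (2 * growthConstant) ^ 2 / 2 = 2 * growthConstant ^ 2 by ring] at bound
  calc growthConstant ^ a = 2 ^ a * growthConstant ^ a * (1 / 2) ^ a := by
        rw [mul_right_comm, ← mul_pow]
        norm_num
    _ ≤ √(a ! : ℝ) * Real.exp (2 * growthConstant ^ 2) * (1 / 2) ^ a := by gcongr
    _ = _ := mul_assoc _ _ _

theorem pow_le_four_mul_div_mul_pow {c x : ℝ} {m : ℕ} (hc : 0 < c) (hx : 4 * c ≤ x) (hm : m ≠ 0) :
    c ^ m ≤ 4 * c / x * (1 / 4) ^ m * x ^ m := by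
  obtain ⟨k, rfl⟩ := Nat.exists_eq_succ_of_ne_zero hm
  have x_pos : 0 < x := by linarith
  calc c ^ (k + 1) = c * c ^ k := pow_succ' _ _
    _ ≤ c * (1 / 4 * x) ^ k := by
        gcongr
        linarith
    _ = _ := by
        rw [mul_pow, pow_succ, pow_succ]
        field_simp

/-- The constant in `contribution_le`. -/
noncomputable def errorConstant : ℝ :=
  4 * Real.exp 3 * Real.exp (2 * growthConstant ^ 2) * growthConstant

theorem contribution_le {N s j a b : ℕ} {x : ℝ} (hN : Even N) (hxN : x ^ 4 = N)
    (hx : 4 * growthConstant ≤ x) (hsb : s + b ≠ 0) :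
    contribution N (s, j, a, b) ≤ errorConstant / x * matchingCount (3 * N) *
      ((1 / 2) ^ s * ((1 / 2) ^ j * ((1 / 2) ^ a * (1 / 2) ^ b))) := by
  have growthConstant_pos := growthConstant_pos
  have x_pos : 0 < x := by linarith
  by_cases hc : contribution N (s, j, a, b) = 0
  · rw [hc, Nat.cast_zero, errorConstant]
    positivity
  have hj := (two_mul_le_and_support_le_of_contribution_ne_zero hc).1
  have one_le_x : 1 ≤ x := by linarith [one_le_growthConstant]
  have quarter_pow_le : (1 / 4 : ℝ) ^ (s + b) ≤ (1 / 2) ^ s * (1 / 2) ^ j * (1 / 2) ^ b := calc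
    (1 / 4 : ℝ) ^ (s + b) = (1 / 2) ^ (2 * (s + b)) := by rw [pow_mul]; norm_num
    _ ≤ (1 / 2) ^ (s + j + b) := pow_le_pow_of_le_one (by norm_num) (by norm_num) (by lia)
    _ = _ := by rw [pow_add, pow_add]
  refine le_of_mul_le_mul_right ((contribution_mul_le hN one_le_x hxN).trans ?_)
    (by positivity : 0 < √(a ! : ℝ) * x ^ (s + b))
  calc Real.exp 3 * growthConstant ^ (s + a + b) * matchingCount (3 * N)
      = Real.exp 3 * growthConstant ^ a * growthConstant ^ (s + b) * matchingCount (3 * N) := by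
        ring
    _ ≤ Real.exp 3 * (√(a ! : ℝ) * (Real.exp (2 * growthConstant ^ 2) * (1 / 2) ^ a)) *
          (4 * growthConstant / x * ((1 / 2) ^ s * (1 / 2) ^ j * (1 / 2) ^ b) * x ^ (s + b)) *
          matchingCount (3 * N) := by
        gcongr
        · exact growthConstant_pow_le a
        · refine (pow_le_four_mul_div_mul_pow growthConstant_pos hx hsb).trans ?_
          gcongr
    _ = _ := by
        rw [errorConstant]
        ring

theorem shearType_mem {N : ℕ} (g : Perm (Fin N) × (Fin N → Perm (Fin 3))) :
    shearType g ∈ range (N + 1) ×ˢ range (N + 1) ×ˢ range (N + 1) ×ˢ range (N + 1) := by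
  have card_le (S : Finset (Fin N)) : #S ≤ N := by simpa using card_le_univ S
  have two_mul_card_cycleType_le := two_mul_card_cycleType_le g.1
  have support_le := card_le g.1.support
  simp only [shearType, mem_product, mem_range, Nat.lt_succ_iff]
  exact ⟨support_le, by lia, card_le _, card_le _⟩

theorem shearType_ne_zero {N : ℕ} {g : Perm (Fin N) × (Fin N → Perm (Fin 3))}
    (hg : ¬(g.1 = 1 ∧ fixedWithSupport g.1 g.2 3 = ∅)) :
    (shearType g).1 + (shearType g).2.2.2 ≠ 0 := by
  contrapose! hg
  obtain ⟨support_eq, fixed_eq⟩ := Nat.add_eq_zero_iff.mp hg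
  exact ⟨Perm.card_support_eq_zero.mp support_eq, card_eq_zero.mp fixed_eq⟩

/-- The elements `(σ, τ)` of `S₃ ≀ S_N` with `σ ≠ 1` or some `τ v` a `3`-cycle; they contribute
asymptotically nothing to the orbit count. -/
def negligibleShears (N : ℕ) : Finset (Perm (Fin N) × (Fin N → Perm (Fin 3))) :=
  {g | ¬(g.1 = 1 ∧ fixedWithSupport g.1 g.2 3 = ∅)}

theorem sum_negligibleShears_le {N : ℕ} {x : ℝ} (hN : Even N) (hxN : x ^ 4 = N)
    (hx : 4 * growthConstant ≤ x) :
    ((∑ g ∈ negligibleShears N, commutingMatchingCount (g.1.prodShear g.2) : ℕ) : ℝ) ≤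
      errorConstant / x * matchingCount (3 * N) * 16 := by
  have growthConstant_pos := growthConstant_pos
  have x_pos : 0 < x := by linarith
  have errorConstant_nonneg : 0 ≤ errorConstant := by
    unfold errorConstant
    positivity
  let types := range (N + 1) ×ˢ range (N + 1) ×ˢ range (N + 1) ×ˢ range (N + 1)
  let weight (t : ℕ × ℕ × ℕ × ℕ) : ℝ :=
    (1 / 2) ^ t.1 * ((1 / 2) ^ t.2.1 * ((1 / 2) ^ t.2.2.1 * (1 / 2) ^ t.2.2.2))
  have maps_to {g} (hg : g ∈ negligibleShears N) :
      shearType g ∈ types.filter fun t => t.1 + t.2.2.2 ≠ 0 :=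
    mem_filter.mpr ⟨shearType_mem g, shearType_ne_zero (mem_filter.mp hg).2⟩
  have sum_le : ∑ g ∈ negligibleShears N, commutingMatchingCount (g.1.prodShear g.2) ≤
      ∑ t ∈ types with t.1 + t.2.2.2 ≠ 0, contribution N t := by
    rw [← sum_fiberwise_of_maps_to fun g => maps_to]
    exact sum_le_sum fun t _ => sum_le_sum_of_subset (filter_subset_filter _ (subset_univ _))
  have sum_weight : ∑ t ∈ types, weight t ≤ 16 := by
    simp only [types, weight, sum_product, ← mul_sum, ← sum_mul]
    set G := ∑ i ∈ range (N + 1), (1 / 2 : ℝ) ^ i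
    have G_nonneg : 0 ≤ G := sum_nonneg fun _ _ => by positivity
    have G_le : G ≤ 2 := sum_geometric_two_le _
    calc G * (G * (G * G)) ≤ 2 * (2 * (2 * 2)) := by gcongr
      _ = 16 := by norm_num
  calc _ ≤ ((∑ t ∈ types with t.1 + t.2.2.2 ≠ 0, contribution N t : ℕ) : ℝ) :=
        Nat.cast_le.mpr sum_le
    _ ≤ ∑ t ∈ types with t.1 + t.2.2.2 ≠ 0,
          errorConstant / x * matchingCount (3 * N) * weight t := by
        rw [Nat.cast_sum]
        exact sum_le_sum fun t ht => contribution_le hN hxN hx (mem_filter.mp ht).2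
    _ ≤ ∑ t ∈ types, errorConstant / x * matchingCount (3 * N) * weight t :=
        sum_le_sum_of_subset_of_nonneg (filter_subset _ _) fun _ _ _ => by positivity
    _ ≤ _ := by
        rw [← mul_sum]
        gcongr

theorem matchingCount_pos {n : ℕ} (hn : Even n) : 0 < matchingCount n := by
  obtain ⟨k, rfl⟩ := hn.two_dvd
  exact Nat.pos_of_mul_pos_right (matchingCount_two_mul k ▸ Nat.factorial_pos _)

/-- The filter of even natural numbers tending to infinity. -/
abbrev atTopEven : Filter ℕ :=
  atTop ⊓ 𝓟 {N | Even N}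

theorem eventually_even : ∀ᶠ N in atTopEven, Even N :=
  mem_inf_of_right (mem_principal_self _)

theorem tendsto_sum_negligibleShears_div :
    Tendsto (fun N : ℕ => ((∑ g ∈ negligibleShears N,
        commutingMatchingCount (g.1.prodShear g.2) : ℕ) : ℝ) / matchingCount (3 * N))
      atTopEven (𝓝 0) := by
  have tendsto_root : Tendsto (fun N : ℕ => √√(N : ℝ)) atTop atTop :=
    Real.tendsto_sqrt_atTop.comp (Real.tendsto_sqrt_atTop.comp tendsto_natCast_atTop_atTop)
  have tendsto_bound : Tendsto (fun N : ℕ => errorConstant / √√(N : ℝ) * 16)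
      atTopEven (𝓝 0) := by
    simpa using ((tendsto_root.const_div_atTop errorConstant).mul_const 16).mono_left inf_le_left
  refine squeeze_zero' (.of_forall fun N => by positivity) ?_ tendsto_bound
  have eventually_large := tendsto_root.eventually_ge_atTop (4 * growthConstant)
  filter_upwards [eventually_large.filter_mono inf_le_left, eventually_even] with N hx hN
  have root_pow : √√(N : ℝ) ^ 4 = N := by
    rw [show √√(N : ℝ) ^ 4 = (√√(N : ℝ) ^ 2) ^ 2 by ring, Real.sq_sqrt (by positivity),
      Real.sq_sqrt (by positivity)]
  rw [div_le_iff₀ (Nat.cast_pos.mpr (matchingCount_pos (hN.mul_left 3)))]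
  exact (sum_negligibleShears_le hN root_pow hx).trans_eq (by ring)

end NegligibleShears

section DominantShears

theorem card_functions_into_transpositions {α : Type*} [Fintype α] [DecidableEq α] (A : Finset α) :
    #{τ : α → Perm (Fin 3) | fixedWithSupport 1 τ 3 = ∅ ∧ fixedWithSupport 1 τ 2 = A} = 3 ^ #A := by
  have iff_of_support : ∀ (ρ : Perm (Fin 3)) (p : Prop) [Decidable p],
      #ρ.support ≠ 3 ∧ (#ρ.support = 2 ↔ p) ↔
        ρ ∈ if p then ({ρ | #ρ.support = 2} : Finset (Perm (Fin 3))) else {1} := by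
    intro ρ p _
    have cases : ∀ ρ : Perm (Fin 3), #ρ.support = 0 ∧ ρ = 1 ∨ #ρ.support = 2 ∧ ρ ≠ 1 ∨
      #ρ.support = 3 ∧ ρ ≠ 1 := by decide
    by_cases hp : p <;> obtain ⟨h, h'⟩ | ⟨h, h'⟩ | ⟨h, h'⟩ := cases ρ <;> simp [hp, h, h']
  have eq_piFinset :
      ({τ | fixedWithSupport 1 τ 3 = ∅ ∧ fixedWithSupport 1 τ 2 = A} : Finset (α → Perm (Fin 3))) =
        Fintype.piFinset fun v =>
          if v ∈ A then ({ρ | #ρ.support = 2} : Finset (Perm (Fin 3))) else {1} := by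
    ext τ
    simp only [mem_filter_univ, Fintype.mem_piFinset, Finset.ext_iff, fixedWithSupport,
      Perm.one_apply, true_and, mem_filter_univ, notMem_empty, iff_false, ← forall_and,
      ← ne_eq, iff_of_support]
  have card_transpositions : #{ρ : Perm (Fin 3) | #ρ.support = 2} = 3 := by decide
  rw [eq_piFinset, Fintype.card_piFinset]
  simp only [apply_ite card, card_transpositions, card_singleton, prod_ite_mem, univ_inter,
    prod_const]

theorem commutingMatchingCount_one_prodShear {N : ℕ} {τ : Fin N → Perm (Fin 3)}
    (hτ : fixedWithSupport 1 τ 3 = ∅) :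
    commutingMatchingCount ((1 : Perm (Fin N)).prodShear τ) =
      matchingCount (3 * N - 2 * #(fixedWithSupport 1 τ 2)) *
        flipInvariantCount #(fixedWithSupport 1 τ 2) := by
  have involutive_of_support : ∀ ρ : Perm (Fin 3), #ρ.support ≠ 3 → ∀ i, ρ (ρ i) = i := by
    decide
  have support_ne (v : Fin N) (h : #(τ v).support = 3) : False :=
    filter_eq_empty_iff.mp hτ (mem_univ v) ⟨rfl, h⟩
  rw [commutingMatchingCount_of_involutive (a := #(fixedWithSupport 1 τ 2))
      (fun x => Prod.ext rfl (involutive_of_support _ (support_ne x.1) x.2))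
      (by rw [card_support_prodShear_fin_three, hτ]; simp),
    Fintype.card_prod, Fintype.card_fin, Fintype.card_fin, mul_comm N]

theorem sum_commutingMatchingCount_one_prodShear (N : ℕ) :
    ∑ τ : Fin N → Perm (Fin 3) with fixedWithSupport 1 τ 3 = ∅,
        commutingMatchingCount ((1 : Perm (Fin N)).prodShear τ) =
      ∑ a ∈ range (N + 1),
        N.choose a * (3 ^ a * (matchingCount (3 * N - 2 * a) * flipInvariantCount a)) := by
  rw [← sum_fiberwise_of_maps_to (t := univ.powerset) (g := fun τ => fixedWithSupport 1 τ 2)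
    fun _ _ => mem_powerset.mpr (subset_univ _)]
  have sum_fiber (A : Finset (Fin N)) :
      ∑ τ ∈ {τ : Fin N → Perm (Fin 3) | fixedWithSupport 1 τ 3 = ∅} with
            fixedWithSupport 1 τ 2 = A,
          commutingMatchingCount ((1 : Perm (Fin N)).prodShear τ) =
        3 ^ #A * (matchingCount (3 * N - 2 * #A) * flipInvariantCount #A) := by
    rw [← card_functions_into_transpositions A, filter_filter, ← smul_eq_mul, ← sum_const]
    refine sum_congr rfl fun τ hτ => ?_
    obtain ⟨no_three, rfl⟩ := (mem_filter.mp hτ).2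
    exact commutingMatchingCount_one_prodShear no_three
  rw [sum_congr rfl fun A _ => sum_fiber A, sum_powerset_apply_card
    (fun a => 3 ^ a * (matchingCount (3 * N - 2 * a) * flipInvariantCount a)), card_univ,
    Fintype.card_fin]
  simp only [smul_eq_mul]

/-- The contribution to the orbit count of the identity of `Fin N` combined with `a`
transpositions, normalised by `flipInvariantCount a / a !` and by the number of all matchings. -/
noncomputable def transpositionWeight (N a : ℕ) : ℝ :=
  N.descFactorial a * 3 ^ a * matchingCount (3 * N - 2 * a) / matchingCount (3 * N)

theorem I_mul_card_eq_sum_add_sum_negligibleShears (N : ℕ) :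
    I N * (N ! * 6 ^ N) =
      ∑ a ∈ range (N + 1),
        N.choose a * (3 ^ a * (matchingCount (3 * N - 2 * a) * flipInvariantCount a)) +
      ∑ g ∈ negligibleShears N, commutingMatchingCount (g.1.prodShear g.2) := by
  rw [I_mul_card_eq_sum_commutingMatchingCount,
    ← sum_filter_add_sum_filter_not univ fun g => g.1 = 1 ∧ fixedWithSupport g.1 g.2 3 = ∅,
    ← sum_commutingMatchingCount_one_prodShear]
  refine congrArg (· + _) ?_
  refine sum_nbij' Prod.snd (fun τ => (1, τ)) ?_ ?_ ?_ ?_ ?_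
  · rintro ⟨σ, τ⟩ hg
    obtain ⟨rfl, hτ⟩ := (mem_filter.mp hg).2
    exact mem_filter_univ _ |>.mpr hτ
  · exact fun τ hτ => mem_filter_univ _ |>.mpr ⟨rfl, (mem_filter.mp hτ).2⟩
  · exact fun g hg => Prod.ext (mem_filter.mp hg).2.1.symm rfl
  · exact fun _ _ => rfl
  · intro g hg
    rw [(mem_filter.mp hg).2.1]

theorem I_mul_card_div_eq (N : ℕ) :
    (I N * (N ! * 6 ^ N) : ℝ) / matchingCount (3 * N) =
      ∑' a, transpositionWeight N a * (flipInvariantCount a / a !) +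
        ((∑ g ∈ negligibleShears N, commutingMatchingCount (g.1.prodShear g.2) : ℕ) : ℝ) /
          matchingCount (3 * N) := by
  have burnside := congrArg (Nat.cast (R := ℝ)) (I_mul_card_eq_sum_add_sum_negligibleShears N)
  rw [Nat.cast_add, Nat.cast_sum] at burnside
  push_cast only [Nat.cast_mul, Nat.cast_pow, Nat.cast_ofNat] at burnside
  rw [burnside, add_div, sum_div]
  congr 1
  have eq_zero (a : ℕ) (ha : a ∉ range (N + 1)) :
      transpositionWeight N a * (flipInvariantCount a / a !) = 0 := by
    rw [transpositionWeight, Nat.descFactorial_of_lt (by simpa using ha)]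
    simp
  rw [tsum_eq_sum eq_zero]
  refine sum_congr rfl fun a _ => ?_
  rw [transpositionWeight, Nat.descFactorial_eq_factorial_mul_choose]
  push_cast
  field_simp

end DominantShears

section TranspositionWeight

theorem transpositionWeight_nonneg (N a : ℕ) : 0 ≤ transpositionWeight N a := by
  unfold transpositionWeight
  positivity

theorem transpositionWeight_le {N : ℕ} (hN : Even N) (a : ℕ) :
    transpositionWeight N a ≤ 12 ^ a := by
  have matchingCount_pos : (0 : ℝ) < matchingCount (3 * N) :=
    Nat.cast_pos.mpr (matchingCount_pos (hN.mul_left 3))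
  rcases lt_or_ge N a with ha | ha
  · rw [transpositionWeight, Nat.descFactorial_of_lt ha]
    simp
  rw [transpositionWeight, div_le_iff₀ matchingCount_pos]
  have bound := matchingCount_sub_mul_sqrt_pow_le hN (r := 2 * a) (by lia)
  rw [pow_mul, Real.sq_sqrt N.cast_nonneg] at bound
  calc (N.descFactorial a : ℝ) * 3 ^ a * matchingCount (3 * N - 2 * a)
      ≤ N ^ a * 3 ^ a * matchingCount (3 * N - 2 * a) := by
        gcongr
        exact_mod_cast Nat.descFactorial_le_pow N a
    _ = 3 ^ a * (matchingCount (3 * N - 2 * a) * N ^ a) := by ring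
    _ ≤ 3 ^ a * (2 ^ (2 * a) * matchingCount (3 * N)) := by gcongr
    _ = 12 ^ a * matchingCount (3 * N) := by
        rw [pow_mul, ← mul_assoc, ← mul_pow]
        norm_num

theorem transpositionWeight_add_one {N a : ℕ} (hN : Even N) (ha : a + 1 ≤ N) :
    transpositionWeight N (a + 1) =
      transpositionWeight N a * (3 * (N - a) / (3 * N - 2 * a - 1)) := by
  obtain ⟨k, hk⟩ : ∃ k, 3 * N = 2 * (k + 1 + a) := by
    obtain ⟨n, rfl⟩ := hN.two_dvd
    exact ⟨3 * n - a - 1, by lia⟩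
  have hk' : (3 * N : ℝ) = 2 * (k + 1 + a) := by exact_mod_cast hk
  rw [transpositionWeight, transpositionWeight, show 3 * N - 2 * (a + 1) = 2 * k by lia,
    show 3 * N - 2 * a = 2 * k + 2 by lia, matchingCount_two_mul_add_two, Nat.descFactorial_succ,
    show (3 * N - 2 * a - 1 : ℝ) = 2 * k + 1 by rw [hk']; ring]
  have : (2 * k + 1 : ℝ) ≠ 0 := by positivity
  push_cast [Nat.cast_sub (show a ≤ N by lia)]
  field_simp
  ring

theorem tendsto_transpositionWeight (a : ℕ) :
    Tendsto (transpositionWeight · a) atTopEven (𝓝 1) := by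
  induction a with
  | zero =>
    refine tendsto_const_nhds.congr' ?_
    filter_upwards [eventually_even] with N hN
    have : (matchingCount (3 * N) : ℝ) ≠ 0 :=
      Nat.cast_ne_zero.mpr (matchingCount_pos (hN.mul_left 3)).ne'
    simp [transpositionWeight, this]
  | succ a ih =>
    have tendsto_inv : Tendsto (fun N : ℕ => (N : ℝ)⁻¹) atTopEven (𝓝 0) :=
      (tendsto_inv_atTop_zero.comp tendsto_natCast_atTop_atTop).mono_left inf_le_left
    have tendsto_factor : Tendsto
        (fun N : ℕ => (3 * (1 - a * (N : ℝ)⁻¹)) / (3 - (2 * a + 1) * (N : ℝ)⁻¹))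
        atTopEven (𝓝 1) := by
      have limit_eq : 3 * (1 - a * 0) / (3 - (2 * a + 1) * 0) = (1 : ℝ) := by norm_num
      have tendsto_quotient := (((tendsto_inv.const_mul (a : ℝ)).const_sub 1).const_mul 3).div
        ((tendsto_inv.const_mul (2 * a + 1 : ℝ)).const_sub 3) (by norm_num)
      rw [limit_eq] at tendsto_quotient
      exact tendsto_quotient
    have tendsto_mul := ih.mul tendsto_factor
    rw [mul_one] at tendsto_mul
    refine tendsto_mul.congr' ?_
    filter_upwards [eventually_even, (eventually_ge_atTop (a + 1)).filter_mono inf_le_left]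
      with N hN ha
    have N_ne_zero : (N : ℝ) ≠ 0 := Nat.cast_ne_zero.mpr (by lia)
    rw [transpositionWeight_add_one hN ha, ← mul_div_mul_right _ _ N_ne_zero]
    congr 2
    · field_simp
    · field_simp
      ring

end TranspositionWeight

section ExponentialGeneratingFunction

theorem preimage_two_mul_fst_add_snd (a : ℕ) :
    (fun p : ℕ × ℕ => 2 * p.1 + p.2) ⁻¹' {a} =
      ((range (a / 2 + 1)).image fun i => (i, a - 2 * i) : Finset (ℕ × ℕ)) := by
  ext ⟨i, k⟩
  simp only [Set.mem_preimage, Set.mem_singleton_iff, mem_coe, mem_image, mem_range, Prod.mk.injEq]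
  constructor
  · rintro rfl
    exact ⟨i, by lia, rfl, by lia⟩
  · rintro ⟨j, hj, rfl, rfl⟩
    lia

theorem hasSum_flipInvariantCount_mul_pow_div_factorial (z : ℝ) :
    HasSum (fun a => z ^ a * (flipInvariantCount a / a !)) (Real.exp (z ^ 2 + z)) := by
  have hasSum_exp (y : ℝ) : HasSum (fun i : ℕ => y ^ i / i !) (Real.exp y) := by
    rw [Real.exp_eq_exp_ℝ]
    exact NormedSpace.expSeries_div_hasSum_exp y
  have hasSum_prod : HasSum (fun p : ℕ × ℕ => (z ^ 2) ^ p.1 / p.1 ! * (z ^ p.2 / p.2 !))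
      (Real.exp (z ^ 2 + z)) := by
    rw [Real.exp_add]
    have summable_norm (y : ℝ) := (hasSum_exp y).summable.norm
    have summable_prod := summable_mul_of_summable_norm (summable_norm (z ^ 2)) (summable_norm z)
    exact HasSum.mul (hasSum_exp (z ^ 2)) (hasSum_exp z) summable_prod
  have hasSum_fiberwise := hasSum_prod.tsum_fiberwise fun p => 2 * p.1 + p.2
  refine hasSum_fiberwise.congr_fun fun a => ?_
  rw [preimage_two_mul_fst_add_snd,
    Finset.tsum_subtype' _ fun p : ℕ × ℕ => (z ^ 2) ^ p.1 / p.1 ! * (z ^ p.2 / p.2 !),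
    sum_image fun i _ j _ h => congrArg Prod.fst h, flipInvariantCount_eq_sum, sum_div, mul_sum]
  refine sum_congr rfl fun i hi => ?_
  have exponent_eq : 2 * i + (a - 2 * i) = a := by
    have := mem_range.mp hi
    lia
  rw [← pow_mul, div_mul_div_comm, ← pow_add, exponent_eq]
  field_simp

end ExponentialGeneratingFunction

theorem tendsto_tsum_transpositionWeight_mul :
    Tendsto (fun N => ∑' a, transpositionWeight N a * (flipInvariantCount a / a !))
      atTopEven (𝓝 (Real.exp 2)) := by
  have limit_eq : ∑' a : ℕ, 1 * (flipInvariantCount a / a ! : ℝ) = Real.exp 2 := by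
    have := (hasSum_flipInvariantCount_mul_pow_div_factorial 1).tsum_eq
    simpa only [one_pow, one_add_one_eq_two] using this
  rw [← limit_eq]
  refine tendsto_tsum_of_dominated_convergence
    (hasSum_flipInvariantCount_mul_pow_div_factorial 12).summable
    (fun a => (tendsto_transpositionWeight a).mul_const _) ?_
  filter_upwards [eventually_even] with N hN a
  rw [Real.norm_of_nonneg (mul_nonneg (transpositionWeight_nonneg N a) (by positivity))]
  exact mul_le_mul_of_nonneg_right (transpositionWeight_le hN a) (by positivity)

theorem tendsto_I_mul_card_div :
    Tendsto (fun N => (I N * (N ! * 6 ^ N) : ℝ) / matchingCount (3 * N))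
      atTopEven (𝓝 (Real.exp 2)) := by
  simpa only [I_mul_card_div_eq, add_zero] using
    tendsto_tsum_transpositionWeight_mul.add tendsto_sum_negligibleShears_div

section Stirling

/-- Stirling's approximation to `k !`. -/
noncomputable def stirlingApprox (k : ℕ) : ℝ := √(2 * k * π) * (k / Real.exp 1) ^ k

theorem stirlingApprox_pos {k : ℕ} (hk : 0 < k) : 0 < stirlingApprox k := by
  unfold stirlingApprox
  positivity

theorem tendsto_factorial_div_stirlingApprox :
    Tendsto (fun k : ℕ => (k ! : ℝ) / stirlingApprox k) atTop (𝓝 1) := by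
  refine (Asymptotics.isEquivalent_iff_tendsto_one ?_).mp Stirling.factorial_isEquivalent_stirling
  filter_upwards [eventually_gt_atTop 0] with k hk
  exact (stirlingApprox_pos hk).ne'

theorem stirlingApprox_six_mul (n : ℕ) :
    stirlingApprox (6 * n) * (√(π * (2 * n)) * (4 * Real.exp 1 / (3 * (2 * n))) ^ n) =
      2 ^ (3 * n) * stirlingApprox (3 * n) * (6 ^ (2 * n) * stirlingApprox (2 * n)) := by
  rcases n.eq_zero_or_pos with rfl | hn
  · simp [stirlingApprox]
  have sqrt_eq : √(2 * (6 * n) * π) * √(π * (2 * n)) =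
      √(2 * (3 * n) * π) * √(2 * (2 * n) * π) := by
    rw [← Real.sqrt_mul (by positivity), ← Real.sqrt_mul (by positivity)]
    ring_nf
  have pow_eq : (6 * n / Real.exp 1) ^ (6 * n) * (4 * Real.exp 1 / (3 * (2 * n))) ^ n =
      2 ^ (3 * n) * (3 * n / Real.exp 1) ^ (3 * n) *
        (6 ^ (2 * n) * (2 * n / Real.exp 1) ^ (2 * n)) := by
    simp only [pow_mul, ← mul_pow]
    congr 1
    field_simp
    norm_num
  simp only [stirlingApprox, Nat.cast_mul, Nat.cast_ofNat]
  linear_combination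
    ((6 * n / Real.exp 1) ^ (6 * n) * (4 * Real.exp 1 / (3 * (2 * n))) ^ n) * sqrt_eq +
      (√(2 * (3 * n) * π) * √(2 * (2 * n) * π)) * pow_eq

theorem matchingCount_div_mul_eq {n : ℕ} (hn : 0 < n) :
    (matchingCount (3 * (2 * n)) : ℝ) / ((2 * n)! * 6 ^ (2 * n)) *
        (√(π * (2 * n)) * (4 * Real.exp 1 / (3 * (2 * n))) ^ n) =
      ((6 * n)! / stirlingApprox (6 * n)) /
        ((3 * n)! / stirlingApprox (3 * n) * ((2 * n)! / stirlingApprox (2 * n))) := by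
  have approx_six := stirlingApprox_six_mul n
  have approx_ne {c : ℕ} (hc : 0 < c) : stirlingApprox (c * n) ≠ 0 :=
    (stirlingApprox_pos (Nat.mul_pos hc hn)).ne'
  have count_eq : (matchingCount (3 * (2 * n)) : ℝ) * (2 ^ (3 * n) * (3 * n)!) = (6 * n)! := by
    rw [show 3 * (2 * n) = 2 * (3 * n) by ring, show 6 * n = 2 * (3 * n) by ring]
    exact_mod_cast matchingCount_two_mul (3 * n)
  rw [← count_eq]
  generalize √(π * (2 * n)) * (4 * Real.exp 1 / (3 * (2 * n))) ^ n = Q at approx_six ⊢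
  field_simp [approx_ne (c := 6) (by simp), approx_ne (c := 3) (by simp),
    approx_ne (c := 2) (by simp)]
  linear_combination (matchingCount (3 * (2 * n)) : ℝ) * approx_six

theorem tendsto_atTopEven_of_two_mul {α : Type*} {l : Filter α} {u : ℕ → α}
    (hu : Tendsto (fun n => u (2 * n)) atTop l) : Tendsto u atTopEven l := by
  refine ((hu.comp (Nat.tendsto_div_const_atTop two_ne_zero)).mono_left inf_le_left).congr' ?_
  filter_upwards [eventually_even] with N hN
  rw [comp_apply, Nat.two_mul_div_two_of_even hN]

theorem tendsto_matchingCount_div_mul :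
    Tendsto (fun N : ℕ => (matchingCount (3 * N) : ℝ) / (N ! * 6 ^ N) *
      (√(π * N) * (4 * Real.exp 1 / (3 * N)) ^ ((N : ℝ) / 2))) atTopEven (𝓝 1) := by
  refine tendsto_atTopEven_of_two_mul ?_
  have tendsto_ratio {c : ℕ} (hc : 0 < c) :
      Tendsto (fun n => ((c * n)! : ℝ) / stirlingApprox (c * n)) atTop (𝓝 1) :=
    tendsto_factorial_div_stirlingApprox.comp (tendsto_id.const_mul_atTop' hc)
  have tendsto_ratios := (tendsto_ratio (c := 6) (by simp)).div
    ((tendsto_ratio (c := 3) (by simp)).mul (tendsto_ratio (c := 2) (by simp))) (by simp)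
  rw [mul_one, div_one] at tendsto_ratios
  refine tendsto_ratios.congr' ?_
  filter_upwards [eventually_gt_atTop 0] with n hn
  rw [Nat.cast_mul 2 n, Nat.cast_ofNat, mul_div_cancel_left₀ _ two_ne_zero, Real.rpow_natCast]
  exact (matchingCount_div_mul_eq hn).symm

end Stirling

end CubicMultigraph

/-- Theorem (Wormald): `I N ∼ (e²/√(πN)) (3N/(4e))^{N/2}` as `N → ∞` through even `N`. -/
theorem cubic_multigraph_count_asymptotics :
    Tendsto
      (fun N : ℕ => (I N : ℝ) * Real.sqrt (π * N) *
        ((4 * Real.exp 1) / (3 * (N : ℝ))) ^ ((N : ℝ) / 2) * Real.exp (-2))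
      (atTop ⊓ 𝓟 {N : ℕ | Even N}) (𝓝 1) := by
  have tendsto_prod := (CubicMultigraph.tendsto_I_mul_card_div.mul
    CubicMultigraph.tendsto_matchingCount_div_mul).mul_const (Real.exp (-2))
  rw [mul_one, ← Real.exp_add, add_neg_cancel, Real.exp_zero] at tendsto_prod
  refine tendsto_prod.congr' ?_
  filter_upwards [CubicMultigraph.eventually_even] with N hN
  have count_pos := CubicMultigraph.matchingCount_pos (hN.mul_left 3)
  field_simp
end

section
/- Asymptotically almost surely, one-vertex triangulations have no nontrivial automorphisms: as g → ∞, with N = 4g−2, the proportion, among ω ∈ Ω_N such that ω∘ρ has exactly one orbit, of those ω for which there exists a permutation σ ≠ id of Fin (3N) commuting with ρ and satisfying σωσ⁻¹ = ω, tends to 0. -/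
open Filter Real Topology

/-- `Omega N`: the perfect matchings of the `3N` half-edges, i.e. fixed-point-free
involutions of `Fin (3N)`. -/
def Omega (N : ℕ) : Type := {ω : Equiv.Perm (Fin (3 * N)) // ∀ a, ω (ω a) = a ∧ ω a ≠ a}

/-- The underlying function of `ρ`: the 3-cycle `(3v, 3v+1, 3v+2)` on each block. -/
def rhoFun {N : ℕ} (a : Fin (3 * N)) : Fin (3 * N) :=
  ⟨3 * (a.val / 3) + (a.val + 1) % 3, by have := a.isLt; omega⟩

/-- `ρ`: the permutation of the half-edges acting as the 3-cycle `(3v, 3v+1, 3v+2)`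
on each block `B_v`. -/
noncomputable def rho (N : ℕ) : Equiv.Perm (Fin (3 * N)) :=
  Equiv.ofBijective rhoFun
    (Finite.injective_iff_bijective.mp (by
      intro a b h
      have h' := congrArg Fin.val h
      simp only [rhoFun] at h'
      exact Fin.ext (by omega)))

/-- `ω` encodes a one-vertex (one-puncture) triangulation exactly when the permutation
`ω ∘ ρ` has a single orbit on the half-edges. -/
def OneOrbit {N : ℕ} (ω : Omega N) : Prop :=
  ∀ a b : Fin (3 * N), (ω.val * rho N).SameCycle a b

/-!
Put `N = 4g - 2` and count up to factors exponential in `g`.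

*One-orbit matchings.* The product of a full cycle with a 3-cycle or with its inverse is again a
full cycle. For the caterpillar matching `ω` and the rotation `r` of `3g - 2` of the blocks, `ω * r`
is a full cycle, and it stays one when `ω` is conjugated by an element of the centralizer of `r`.
Orienting the other blocks one after the other, which amounts to a blockwise conjugation, turns each
of these conjugates into a one-orbit matching. This map has fibers of exponential size, so there are
at least about `|C(r)| ≥ (3g)! (3g - 2)! ≈ g ^ (6g)` one-orbit matchings.

*Symmetric ones.* An automorphism `σ` of order `d ≥ 2` commutes with the full cycle `ω * ρ`, hence
acts freely and has at most `3N / d` cycles. A permutation of `n` points with at least `b` cycles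
is determined by a transversal of `b` of its cycles and its values elsewhere, so there are about
`n ^ (n - b)` of them. Applied to the action of `σ` on the blocks and to the action of the
involution `ω` on the cycles of `σ`, this leaves about
`N ^ (N - N / d + 3N / (2d)) ≤ N ^ (5N / 4) ≈ g ^ (5g)` pairs. The proportion is therefore at most
about `g ^ (-g)`.
-/

section FullCycles

open Equiv Equiv.Perm

variable {X : Type*} {c : Perm X}

lemma isCycleOn_univ_iff : c.IsCycleOn Set.univ ↔ ∀ x y, c.SameCycle x y := by
  simp [IsCycleOn, c.bijective.bijOn_univ]

lemma isCycleOn_univ_of_forall_sameCycle {x : X} (h : ∀ y, c.SameCycle x y) :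
    c.IsCycleOn Set.univ :=
  isCycleOn_univ_iff.2 fun y z => (h y).symm.trans (h z)

lemma isCycleOn_univ_conj (hc : c.IsCycleOn Set.univ) (g : Perm X) :
    (g * c * g⁻¹).IsCycleOn Set.univ := by
  simpa only [Set.image_univ_of_surjective g.surjective] using hc.conj (g := g)

lemma sign_of_isCycleOn_univ [Fintype X] [DecidableEq X] [Nontrivial X]
    (hc : c.IsCycleOn Set.univ) : sign c = -(-1) ^ Fintype.card X := by
  have hfix : ∀ x, c x ≠ x := fun x => hc.apply_ne Set.nontrivial_univ (Set.mem_univ x)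
  have hsupp : c.support = Finset.univ := by ext x; simp [hfix x]
  obtain ⟨x⟩ : Nonempty X := inferInstance
  have hcycle : c.IsCycle := ⟨x, hfix x, fun y _ => isCycleOn_univ_iff.1 hc x y⟩
  rw [hcycle.sign, hsupp, Finset.card_univ]

section Finite

variable [Finite X]

lemma mem_of_sameCycle_of_mapsTo {S : Set X} (hS : Set.MapsTo c S S) {x y : X} (hx : x ∈ S)
    (h : c.SameCycle x y) : y ∈ S := by
  obtain ⟨n, rfl⟩ := h.exists_nat_pow_eq
  rw [← iterate_eq_pow]
  exact hS.iterate n hx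

lemma sameCycle_of_forall_sameCycle_apply {c' : Perm X} (h : ∀ x, c'.SameCycle x (c x)) {x y : X}
    (hxy : c.SameCycle x y) : c'.SameCycle x y :=
  mem_of_sameCycle_of_mapsTo (S := {z | c'.SameCycle x z}) (fun z hz => hz.trans (h z))
    SameCycle.rfl hxy

lemma eq_of_commute_of_isCycleOn_univ (hc : c.IsCycleOn Set.univ) {σ τ : Perm X}
    (hσ : Commute σ c) (hτ : Commute τ c) {x : X} (hx : σ x = τ x) : σ = τ := by
  ext y
  refine mem_of_sameCycle_of_mapsTo (S := {z | σ z = τ z}) (fun z (hz : σ z = τ z) => ?_) hx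
    (isCycleOn_univ_iff.1 hc x y)
  change (σ * c) z = (τ * c) z
  rw [hσ.eq, hτ.eq, mul_apply, mul_apply, hz]

variable [DecidableEq X] {a b : X}

lemma mul_swap_sameCycle_apply_of_not_sameCycle (hab : ¬c.SameCycle a b) :
    (c * swap a b).SameCycle a (c a) := by
  by_contra hn
  have hS : Set.MapsTo c {x | c.SameCycle a x ∧ (c * swap a b).SameCycle (c a) x}
      {x | c.SameCycle a x ∧ (c * swap a b).SameCycle (c a) x} := by
    rintro x ⟨hax, hcx⟩
    have hxa : x ≠ a := by rintro rfl; exact hn hcx.symm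
    have hxb : x ≠ b := by rintro rfl; exact hab hax
    have hx : (c * swap a b) x = c x := by rw [mul_apply, swap_apply_of_ne_of_ne hxa hxb]
    exact ⟨sameCycle_apply_right.2 hax, hx ▸ sameCycle_apply_right.2 hcx⟩
  exact hn (mem_of_sameCycle_of_mapsTo hS ⟨sameCycle_apply_right.2 .rfl, .rfl⟩
    (sameCycle_apply_left.2 (SameCycle.refl c a))).2.symm

lemma mul_swap_sameCycle_of_not_sameCycle (hab : ¬c.SameCycle a b) :
    (c * swap a b).SameCycle a b := by
  have h := mul_swap_sameCycle_apply_of_not_sameCycle hab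
  rwa [← show (c * swap a b) b = c a by simp, sameCycle_apply_right] at h

lemma sameCycle_mul_swap (hab : ¬c.SameCycle a b) {x y : X} (hxy : c.SameCycle x y) :
    (c * swap a b).SameCycle x y := by
  refine sameCycle_of_forall_sameCycle_apply (fun z => ?_) hxy
  obtain rfl | hza := eq_or_ne z a
  · exact mul_swap_sameCycle_apply_of_not_sameCycle hab
  obtain rfl | hzb := eq_or_ne z b
  · exact swap_comm a z ▸ mul_swap_sameCycle_apply_of_not_sameCycle fun h => hab h.symm
  rw [← show (c * swap a b) z = c z by rw [mul_apply, swap_apply_of_ne_of_ne hza hzb]]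
  exact sameCycle_apply_right.2 .rfl

lemma mul_swap_sameCycle_or_sameCycle (hc : c.IsCycleOn Set.univ) (a b x : X) :
    (c * swap a b).SameCycle a x ∨ (c * swap a b).SameCycle b x := by
  refine mem_of_sameCycle_of_mapsTo
    (S := {x | (c * swap a b).SameCycle a x ∨ (c * swap a b).SameCycle b x})
    (fun z hz => ?_) (.inl .rfl) (isCycleOn_univ_iff.1 hc a x)
  obtain ⟨w, rfl⟩ := (swap a b).surjective z
  change (c * swap a b).SameCycle a ((c * swap a b) w) ∨
    (c * swap a b).SameCycle b ((c * swap a b) w)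
  rw [sameCycle_apply_right, sameCycle_apply_right]
  obtain rfl | hwa := eq_or_ne w a
  · exact .inl .rfl
  obtain rfl | hwb := eq_or_ne w b
  · exact .inr .rfl
  rwa [swap_apply_of_ne_of_ne hwa hwb] at hz

lemma not_isCycleOn_univ_mul_swap (hc : c.IsCycleOn Set.univ) (hab : a ≠ b) :
    ¬(c * swap a b).IsCycleOn Set.univ := by
  intro h
  have : Nontrivial X := ⟨a, b, hab⟩
  have := Fintype.ofFinite X
  have hsign := Perm.sign_mul c (swap a b)
  rw [sign_of_isCycleOn_univ h, sign_of_isCycleOn_univ hc, sign_swap hab] at hsign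
  rcases neg_one_pow_eq_or ℤˣ (Fintype.card X) with h | h <;> simp [h] at hsign

lemma isCycleOn_univ_mul_swap {f : Perm X} {d : X} (hf : ∀ x, f.SameCycle a x ∨ f.SameCycle b x)
    (hbd : f.SameCycle b d) (had : ¬f.SameCycle a d) :
    (f * swap a d).IsCycleOn Set.univ := by
  refine isCycleOn_univ_of_forall_sameCycle (x := a) fun x => ?_
  obtain hax | hbx := hf x
  · exact sameCycle_mul_swap had hax
  · exact (mul_swap_sameCycle_of_not_sameCycle had).trans
      (sameCycle_mul_swap had (hbd.symm.trans hbx))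

end Finite

-- Multiplying by the transposition `(a b)` splits the full cycle in two (by parity), `d` lies in
-- exactly one of the two pieces, and multiplying by the transposition of `d` with the
-- representative `a` or `b` of the other piece merges them again.
lemma isCycleOn_univ_mul_isThreeCycle_or_inv [Fintype X] [DecidableEq X]
    (hc : c.IsCycleOn Set.univ) {t : Perm X} (ht : t.IsThreeCycle) :
    (c * t).IsCycleOn Set.univ ∨ (c * t⁻¹).IsCycleOn Set.univ := by
  obtain ⟨a, ha⟩ := ht.isCycle.nonempty_support
  have ht_eq := ht.eq_swap_mul_swap_iff_mem_support.2 ha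
  have hnodup := ht.nodup_iff_mem_support.2 ha
  generalize t a = b, t (t a) = d at ht_eq hnodup
  obtain ⟨hab, had, hbd⟩ : a ≠ b ∧ a ≠ d ∧ b ≠ d := by simpa [and_assoc] using hnodup
  have ht_inv : t⁻¹ = swap a b * swap a d := by
    rw [ht_eq, mul_inv_rev, swap_inv, swap_inv, mul_swap_eq_swap_mul (swap a b),
      swap_apply_left, swap_apply_of_ne_of_ne had.symm hbd.symm]
  rw [ht_inv, ht_eq, ← mul_assoc, ← mul_assoc]
  have hsplit := mul_swap_sameCycle_or_sameCycle hc a b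
  by_cases h : (c * swap a b).SameCycle a d
  · have hbd' : ¬(c * swap a b).SameCycle b d := fun h' =>
      not_isCycleOn_univ_mul_swap hc hab <| isCycleOn_univ_of_forall_sameCycle fun x =>
        (hsplit x).elim id (h.trans h'.symm).trans
    exact .inl (isCycleOn_univ_mul_swap (fun x => (hsplit x).symm) h hbd')
  · exact .inr (isCycleOn_univ_mul_swap hsplit ((hsplit d).resolve_left h) h)

end FullCycles

section BlockPermutations

open Equiv Equiv.Perm Subgroup
open scoped Nat

variable {V F X : Type*}

/-- The permutation of `X` which, under an identification `e` of `X` with a disjoint union of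
blocks `{v} × F`, preserves every block and acts on the block of `v` by `f v`. -/
def blockPerm (e : V × F ≃ X) : (V → Perm F) →* Perm X where
  toFun f := e.permCongr (prodCongrRight f)
  map_one' := by ext; simp [prodCongrRight]
  map_mul' f g := by ext; simp [prodCongrRight]

lemma blockPerm_apply (e : V × F ≃ X) (f : V → Perm F) (v : V) (i : F) :
    blockPerm e f (e (v, i)) = e (v, f v i) := by
  simp [blockPerm, prodCongrRight]

variable [Fintype F] [DecidableEq F] {e : V × F ≃ X} {t : Perm F}

lemma card_support_blockPerm [Fintype V] [Fintype X] [DecidableEq X] (f : V → Perm F) :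
    (blockPerm e f).support.card = ∑ v, (f v).support.card := by
  rw [← Finset.card_sigma]
  refine (Finset.card_bij (fun p _ => e (p.1, p.2)) (fun p hp => ?_) (fun p _ q _ h => ?_)
    fun x hx => ?_).symm
  · simpa [blockPerm_apply] using hp
  · obtain ⟨h₁, h₂⟩ := Prod.ext_iff.1 (e.injective h)
    exact Sigma.ext h₁ (heq_of_eq h₂)
  · obtain ⟨⟨v, i⟩, rfl⟩ := e.surjective x
    exact ⟨⟨v, i⟩, by simpa [blockPerm_apply] using hx, rfl⟩

lemma isThreeCycle_blockPerm_mulSingle [Finite V] [DecidableEq V] [Fintype X] [DecidableEq X]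
    (ht : t.IsThreeCycle) (v : V) : (blockPerm e (Pi.mulSingle v t)).IsThreeCycle := by
  have := Fintype.ofFinite V
  rw [← card_support_eq_three_iff, card_support_blockPerm, Finset.sum_eq_single v,
    Pi.mulSingle_eq_same, ht.card_support]
  · intro w _ hw
    rw [Pi.mulSingle_eq_of_ne hw, support_one, Finset.card_empty]
  · simp

lemma exists_isCycleOn_univ_mul_blockPerm [Finite V] [Finite X] {c : Perm X}
    (hc : c.IsCycleOn Set.univ) (ht : t.IsThreeCycle) (A : Finset V) :
    ∃ f : V → Perm F, (∀ v ∈ A, f v = t ∨ f v = t⁻¹) ∧ (∀ v ∉ A, f v = 1) ∧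
      (c * blockPerm e f).IsCycleOn Set.univ := by
  classical
  have := Fintype.ofFinite X
  induction A using Finset.induction_on with
  | empty => exact ⟨1, by simp, fun _ _ => rfl, by rwa [map_one, mul_one]⟩
  | insert w A hw ih =>
    obtain ⟨f, hfA, hfAc, hf⟩ := ih
    obtain ⟨s, hs, hfs⟩ : ∃ s : Perm F, (s = t ∨ s = t⁻¹) ∧
        (c * blockPerm e (f * Pi.mulSingle w s)).IsCycleOn Set.univ := by
      have h := isCycleOn_univ_mul_isThreeCycle_or_inv hf
        (isThreeCycle_blockPerm_mulSingle (e := e) ht w)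
      simp only [← map_inv, ← Pi.mulSingle_inv, mul_assoc, ← map_mul] at h
      exact h.elim (⟨t, .inl rfl, ·⟩) (⟨t⁻¹, .inr rfl, ·⟩)
    refine ⟨_, fun v hv => ?_, fun v hv => ?_, hfs⟩
    · obtain rfl | hvw := eq_or_ne v w
      · simpa [hfAc v hw] using hs
      · simpa [hvw] using hfA v (Finset.mem_of_mem_insert_of_ne hv hvw)
    · obtain ⟨hvw, hvA⟩ := not_or.1 (Finset.mem_insert.not.1 hv)
      simp [hvw, hfAc v hvA]

-- `t` and `t⁻¹` are conjugate in `Perm F`, so the choice of orientation of every remaining block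
-- made in `exists_isCycleOn_univ_mul_blockPerm` amounts to a blockwise conjugation.
lemma exists_isCycleOn_univ_mul_blockPerm_conj [Finite V] [DecidableEq V] [Finite X]
    (ht : t.IsThreeCycle) (U : Finset V) {ω : Perm X}
    (hω : (ω * blockPerm e fun v => if v ∈ U then t else 1).IsCycleOn Set.univ) :
    ∃ k : V → Perm F,
      ((blockPerm e k)⁻¹ * ω * blockPerm e k * blockPerm e fun _ => t).IsCycleOn Set.univ := by
  have := Fintype.ofFinite V
  obtain ⟨f, hfU, hf1, hf⟩ := exists_isCycleOn_univ_mul_blockPerm hω ht Uᶜ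
  obtain ⟨τ, hτ⟩ : ∃ τ : Perm F, τ * t * τ⁻¹ = t⁻¹ :=
    isConj_iff.1 (isConj_iff_cycleType_eq.2 (cycleType_inv t).symm)
  let k : V → Perm F := fun v => if v ∈ U ∨ f v = t then 1 else τ
  have hk : (fun v => if v ∈ U then t else 1) * f = k * (fun _ => t) * k⁻¹ := by
    funext v
    by_cases hv : v ∈ U
    · simp [k, hv, hf1 v (by simpa using hv)]
    · obtain hfv | hfv := hfU v (by simpa using hv) <;> by_cases h : t⁻¹ = t <;>
        simp [k, hv, hfv, hτ, h]
  refine ⟨k, ?_⟩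
  rw [mul_assoc, ← map_mul, hk, map_mul, map_mul, map_inv] at hf
  have := isCycleOn_univ_conj hf (blockPerm e k)⁻¹
  simpa only [mul_assoc, inv_inv, inv_mul_cancel, mul_one] using this

-- An element `h` of the centralizer of `r` is determined by `h * ω * h⁻¹` and its value at one
-- point, because only the identity commutes with `ω * r` and has a fixed point. Besides that value,
-- record the blockwise conjugation turning `h * ω * h⁻¹` into the required form.
lemma card_centralizer_blockPerm_le [Fintype V] [DecidableEq V] [Fintype X] [Nonempty X]
    (ht : t.IsThreeCycle) (U : Finset V) {ω : Perm X}
    (hω : (ω * blockPerm e fun v => if v ∈ U then t else 1).IsCycleOn Set.univ) :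
    Nat.card (centralizer {blockPerm e fun v => if v ∈ U then t else 1}) ≤
      Nat.card {ω' : Perm X // IsConj ω ω' ∧ (ω' * blockPerm e fun _ => t).IsCycleOn Set.univ} *
        (Fintype.card X * (Fintype.card F)! ^ Fintype.card V) := by
  set r := blockPerm e fun v => if v ∈ U then t else 1
  have hcomm (h : centralizer {r}) : Commute (h : Perm X) r :=
    (mem_centralizer_singleton_iff.1 h.2)
  have hfull (h : centralizer {r}) : (h * ω * (h : Perm X)⁻¹ * r).IsCycleOn Set.univ := by
    have := isCycleOn_univ_conj hω h
    rwa [← mul_assoc, mul_assoc _ r, (hcomm h).symm.inv_right.eq, ← mul_assoc] at this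
  choose k hk using fun h => exists_isCycleOn_univ_mul_blockPerm_conj ht U (hfull h)
  obtain ⟨x⟩ := ‹Nonempty X›
  let Φ (h : centralizer {r}) :
      {ω' : Perm X // IsConj ω ω' ∧ (ω' * blockPerm e fun _ => t).IsCycleOn Set.univ} ×
        X × (V → Perm F) :=
    (⟨(blockPerm e (k h))⁻¹ * (h * ω * (h : Perm X)⁻¹) * blockPerm e (k h),
      isConj_iff.2 ⟨(blockPerm e (k h))⁻¹ * h, by group⟩, hk h⟩, (h : Perm X) x, k h)
  have hΦ : Function.Injective Φ := by
    intro h₁ h₂ h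
    obtain ⟨hconj, hx, hk⟩ : _ ∧ _ ∧ _ := by simpa only [Φ, Prod.ext_iff, Subtype.ext_iff] using h
    rw [hk, mul_left_inj, mul_right_inj] at hconj
    have hω_comm : Commute ((h₁ : Perm X)⁻¹ * h₂) ω := by
      calc (h₁ : Perm X)⁻¹ * h₂ * ω = (h₁ : Perm X)⁻¹ * (h₂ * ω * (h₂ : Perm X)⁻¹) * h₂ := by group
        _ = ω * ((h₁ : Perm X)⁻¹ * h₂) := by rw [← hconj]; group
    have := eq_of_commute_of_isCycleOn_univ hω (τ := 1)
      (hω_comm.mul_right ((hcomm h₁).inv_left.mul_left (hcomm h₂))) (Commute.one_left _)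
      (x := x) (by simp [← hx])
    exact Subtype.ext (inv_mul_eq_one.1 this)
  simpa [Nat.card_prod, Nat.card_fun, Fintype.card_perm] using Nat.card_le_card_of_injective Φ hΦ

lemma factorial_mul_factorial_le_card_centralizer [Fintype X] [DecidableEq X] {p u : ℕ}
    [Fact p.Prime] {g : Perm X} (hg : g ^ p = 1) (hu : g.support.card = p * u) :
    (Fintype.card X - p * u)! * u ! ≤ Nat.card (centralizer {g}) := by
  have hp : 0 < p := (Fact.out : p.Prime).pos
  have htype : g.cycleType = Multiset.replicate u p := by
    have h := cycleType_of_pow_prime_eq_one hg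
    have hsum := sum_cycleType g
    rw [h, Multiset.sum_replicate, smul_eq_mul, mul_comm, hu] at hsum
    rw [h, Nat.eq_of_mul_eq_mul_left hp hsum]
  have hprod : ∏ n ∈ g.cycleType.toFinset, (g.cycleType.count n)! = u ! := by
    rw [htype]
    obtain rfl | hu := eq_or_ne u 0
    · simp
    · simp [Multiset.toFinset_replicate, hu]
  rw [nat_card_centralizer, hprod, sum_cycleType, hu]
  refine Nat.mul_le_mul_right _ (Nat.le_mul_of_pos_right _ ?_)
  rw [htype, Multiset.prod_replicate]
  exact pow_pos hp u

end BlockPermutations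

section Blocks

open Equiv Equiv.Perm

/-- The identification of the `i`-th half-edge of the block `v` with the half-edge `3 * v + i`. -/
def halfEdgeEquiv (N : ℕ) : Fin N × Fin 3 ≃ Fin (3 * N) :=
  finProdFinEquiv.trans (finCongr (mul_comm N 3))

lemma blockPerm_halfEdgeEquiv_apply {N : ℕ} (f : Fin N → Perm (Fin 3)) (x : Fin (3 * N)) :
    (blockPerm (halfEdgeEquiv N) f x : ℕ) =
      3 * (x / 3) + f ⟨x / 3, by omega⟩ ⟨x % 3, by omega⟩ := by
  have hx : x = halfEdgeEquiv N (⟨x / 3, by omega⟩, ⟨x % 3, by omega⟩) :=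
    Fin.ext (Nat.mod_add_div x 3).symm
  conv_lhs => rw [hx, blockPerm_apply]
  exact add_comm _ _

lemma val_finRotate_three (i : Fin 3) : (finRotate 3 i : ℕ) = (i + 1) % 3 := by
  decide +revert

lemma isThreeCycle_finRotate_three : (finRotate 3).IsThreeCycle :=
  cycleType_finRotate

lemma finRotate_three_pow_three : finRotate 3 ^ 3 = 1 := by
  decide

lemma rho_eq_blockPerm (N : ℕ) : rho N = blockPerm (halfEdgeEquiv N) fun _ => finRotate 3 := by
  ext x
  rw [blockPerm_halfEdgeEquiv_apply, val_finRotate_three]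
  change 3 * (x.val / 3) + (x.val + 1) % 3 = _
  rw [Nat.mod_add_mod]

lemma oneOrbit_iff {N : ℕ} {ω : Omega N} :
    OneOrbit ω ↔ (ω.val * rho N).IsCycleOn Set.univ :=
  isCycleOn_univ_iff.symm

instance (N : ℕ) : Finite (Omega N) := Subtype.finite

end Blocks

section Caterpillar

open Equiv Equiv.Perm Subgroup
open scoped Nat

variable {M N x : ℕ}

/-- The caterpillar matching on half-edges. The blocks `0, …, M - 1` form a path, with half-edge
`3 * k + 1` of block `k` glued to half-edge `3 * (k + 1)` of block `k + 1`. The remaining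
half-edges `3 * k + 2`, `0` and `3 * M - 2` of these blocks are glued to the leaves `3 * M + k`,
`4 * M` and `4 * M + 1`. -/
def caterpillarFun (M x : ℕ) : ℕ :=
  if x < 3 * M then
    if x % 3 = 2 then 3 * M + x / 3
    else if x = 0 then 4 * M
    else if x = 3 * M - 2 then 4 * M + 1
    else if x % 3 = 0 then x - 2
    else x + 2
  else if x < 4 * M then 3 * (x - 3 * M) + 2
  else if x = 4 * M then 0
  else 3 * M - 2

lemma caterpillarFun_lt (h : 3 * N = 4 * M + 2) (hx : x < 3 * N) :
    caterpillarFun M x < 3 * N := by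
  unfold caterpillarFun; split_ifs <;> omega

lemma caterpillarFun_ne (h : 3 * N = 4 * M + 2) : caterpillarFun M x ≠ x := by
  unfold caterpillarFun; split_ifs <;> omega

lemma caterpillarFun_involutive (h : 3 * N = 4 * M + 2) (hx : x < 3 * N) :
    caterpillarFun M (caterpillarFun M x) = x := by
  generalize hy : caterpillarFun M x = y
  unfold caterpillarFun at hy ⊢
  split_ifs at hy <;> split_ifs <;> omega

/-- The caterpillar matching as an element of `Omega N`. -/
def caterpillar (h : 3 * N = 4 * M + 2) : Omega N :=
  ⟨Function.Involutive.toPerm (fun x => ⟨caterpillarFun M x, caterpillarFun_lt h x.isLt⟩)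
    fun x => Fin.ext (caterpillarFun_involutive h x.isLt),
    fun x => ⟨Fin.ext (caterpillarFun_involutive h x.isLt),
      fun hx => caterpillarFun_ne h (congrArg Fin.val hx)⟩⟩

/-- The rotation of the first `M` blocks, fixing all other half-edges. -/
def initialRotation (N M : ℕ) : Perm (Fin (3 * N)) :=
  blockPerm (halfEdgeEquiv N) fun v =>
    if v ∈ (Finset.univ.filter fun v : Fin N => v.val < M) then finRotate 3 else 1

lemma caterpillar_mul_initialRotation_apply (h : 3 * N = 4 * M + 2) (x : Fin (3 * N)) :
    (((caterpillar h).val * initialRotation N M) x : ℕ) =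
      caterpillarFun M (if (x : ℕ) < 3 * M then 3 * (x / 3) + (x + 1) % 3 else x) := by
  change caterpillarFun M (initialRotation N M x) = _
  rw [initialRotation, blockPerm_halfEdgeEquiv_apply]
  simp only [Finset.mem_filter_univ, Nat.div_lt_iff_lt_mul three_pos, mul_comm M 3]
  split_ifs
  · rw [val_finRotate_three, Nat.mod_add_mod]
  · rw [Perm.one_apply, Nat.div_add_mod]

lemma caterpillar_halfEdge_cases (hx : x < 4 * M + 2) :
    (∃ k < M, x = 3 * k ∨ x = 3 * k + 1 ∨ x = 3 * k + 2 ∨ x = 3 * M + k) ∨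
      x = 4 * M ∨ x = 4 * M + 1 := by
  by_cases hblock : x < 3 * M
  · exact .inl ⟨x / 3, by omega⟩
  by_cases hleaf : x < 4 * M
  · exact .inl ⟨x - 3 * M, by omega⟩
  · omega

-- The orbit of `0` walks along the half-edges `3 * k` to the end of the path and comes back
-- through the leaves.
lemma isCycleOn_univ_caterpillar (h : 3 * N = 4 * M + 2) :
    ((caterpillar h).val * initialRotation N M).IsCycleOn Set.univ := by
  set c := (caterpillar h).val * initialRotation N M
  let P (n : ℕ) : Prop := ∀ hn : n < 3 * N, c.SameCycle ⟨0, by omega⟩ ⟨n, hn⟩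
  have step {m n : ℕ} (hm : m < 3 * N)
      (hmn : caterpillarFun M (if m < 3 * M then 3 * (m / 3) + (m + 1) % 3 else m) = n)
      (hPm : P m) : P n := fun hn => by
    have hcm : c ⟨m, hm⟩ = ⟨n, hn⟩ :=
      Fin.ext ((caterpillar_mul_initialRotation_apply h ⟨m, hm⟩).trans hmn)
    exact hcm ▸ sameCycle_apply_right.2 (hPm hm)
  unfold caterpillarFun at step
  have hup (k : ℕ) (hk : k < M) : P (3 * k) := by
    induction k with
    | zero => exact fun _ => .rfl
    | succ k ih => exact step (by omega) (by split_ifs <;> omega) (ih (by omega))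
  have hlast : P (4 * M + 1) :=
    step (by omega) (by split_ifs <;> omega) (hup (M - 1) (by omega))
  have hleaf (k : ℕ) (hk : k < M) (hPk : P (3 * k + 1)) : P (3 * M + k) :=
    step (by omega) (by split_ifs <;> omega) hPk
  have hthird (k : ℕ) (hk : k < M) (hPk : P (3 * k + 1)) : P (3 * k + 2) :=
    step (by omega) (by split_ifs <;> omega) (hleaf k hk hPk)
  have hdown (k : ℕ) (hk : k < M) : P (3 * k + 1) :=
    Nat.decreasingInduction' (P := fun k => P (3 * k + 1)) (n := M - 1)
      (fun k hk _ ih => step (by omega) (by split_ifs <;> omega) (hthird (k + 1) (by omega) ih))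
      (by omega) (step (by omega) (by split_ifs <;> omega) hlast)
  have hfirst : P (4 * M) :=
    step (m := 2) (by omega) (by simp [show 2 < 3 * M by omega, show 0 < M by omega])
      (hthird 0 (by omega) (hdown 0 (by omega)))
  refine isCycleOn_univ_of_forall_sameCycle (x := ⟨0, by omega⟩) fun x => (?_ : P x) x.isLt
  obtain ⟨k, hk, hx | hx | hx | hx⟩ | hx | hx := caterpillar_halfEdge_cases (x.isLt.trans_eq h)
  all_goals rw [hx]
  exacts [hup k hk, hdown k hk, hthird k hk (hdown k hk), hleaf k hk (hdown k hk), hfirst, hlast]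

lemma card_support_initialRotation (hMN : M ≤ N) : (initialRotation N M).support.card = 3 * M := by
  have hcard : (Finset.univ.filter fun v : Fin N => v.val < M).card = M := by
    rw [Fin.card_filter_val_lt, min_eq_right hMN]
  rw [initialRotation, card_support_blockPerm]
  simp only [apply_ite support, apply_ite Finset.card, isThreeCycle_finRotate_three.card_support,
    support_one, Finset.card_empty, Finset.sum_ite_mem, Finset.univ_inter, Finset.sum_const, hcard,
    smul_eq_mul, mul_comm]

lemma initialRotation_pow_three : initialRotation N M ^ 3 = 1 := by
  rw [initialRotation, ← map_pow, ← map_one (blockPerm (halfEdgeEquiv N))]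
  congr 1
  funext v
  rw [Pi.pow_apply, ite_pow, one_pow, finRotate_three_pow_three, ite_self, Pi.one_apply]

lemma factorial_mul_factorial_le_card_oneOrbit (h : 3 * N = 4 * M + 2) :
    (M + 2)! * M ! ≤ Nat.card {ω : Omega N // OneOrbit ω} * (3 * N * 6 ^ N) := by
  have : Nonempty (Fin (3 * N)) := ⟨⟨0, by omega⟩⟩
  have hcentralizer := factorial_mul_factorial_le_card_centralizer initialRotation_pow_three
    (card_support_initialRotation (show M ≤ N by omega))
  have hconj := card_centralizer_blockPerm_le isThreeCycle_finRotate_three _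
    (isCycleOn_univ_caterpillar h)
  rw [← rho_eq_blockPerm] at hconj
  rw [Fintype.card_fin, show 3 * N - 3 * M = M + 2 by omega] at hcentralizer
  simp only [Fintype.card_fin] at hconj
  refine (hcentralizer.trans hconj).trans (Nat.mul_le_mul_right _ ?_)
  have hOmega (ω : Perm (Fin (3 * N))) (hω : IsConj (caterpillar h).val ω) (x : Fin (3 * N)) :
      ω (ω x) = x ∧ ω x ≠ x := by
    obtain ⟨γ, rfl⟩ := isConj_iff.1 hω
    simpa [← eq_inv_iff_eq] using (caterpillar h).2 (γ⁻¹ x)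
  refine Nat.card_le_card_of_injective (fun ω => ⟨⟨ω.1, hOmega ω.1 ω.2.1⟩, oneOrbit_iff.2 ω.2.2⟩)
    fun ω₁ ω₂ hω => Subtype.ext (congrArg (fun ω => ω.1.1) hω)

end Caterpillar

section Cycles

open Equiv Equiv.Perm Subgroup

variable {X : Type*}

/-- The type of cycles of a permutation, with each fixed point counting as a cycle. -/
abbrev Cycles (f : Perm X) : Type _ := Quotient (SameCycle.setoid f)

/-- The action on the cycles of `p` of the permutations commuting with `p`. -/
def centralizerToPermCycles (p : Perm X) : centralizer {p} →* Perm (Cycles p) where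
  toFun τ := Quotient.congr τ.1 fun x y => by
    have h : τ * p * (τ : Perm X)⁻¹ = p :=
      mul_inv_eq_of_eq_mul (mem_centralizer_singleton_iff.1 τ.2)
    have hxy : (τ * p * (τ : Perm X)⁻¹).SameCycle (τ.1 x) (τ.1 y) ↔ p.SameCycle x y := by
      simp [sameCycle_conj]
    rw [h] at hxy
    exact hxy.symm
  map_one' := by ext q; induction q using Quotient.inductionOn; rfl
  map_mul' _ _ := by ext q; induction q using Quotient.inductionOn; rfl

variable [Finite X]

lemma exists_pow_out_eq (f : Perm X) (x : X) :
    ∃ i : Fin (orderOf f), (f ^ (i : ℕ)) (⟦x⟧ : Cycles f).out = x := by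
  obtain ⟨i, hi⟩ := (Quotient.mk_out (s := SameCycle.setoid f) x).exists_nat_pow_eq
  exact ⟨⟨i % orderOf f, Nat.mod_lt _ (orderOf_pos f)⟩, by rwa [pow_mod_orderOf]⟩

lemma card_le_card_cycles_mul_orderOf (f : Perm X) :
    Nat.card X ≤ Nat.card (Cycles f) * orderOf f := by
  have h := Nat.card_le_card_of_surjective
    (fun a : Cycles f × Fin (orderOf f) => (f ^ (a.2 : ℕ)) a.1.out) fun x =>
      (exists_pow_out_eq f x).elim fun i hi => ⟨(⟦x⟧, i), hi⟩
  rwa [Nat.card_prod, Nat.card_fin] at h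

lemma card_cycles_mul_orderOf_le {c σ : Perm X} (hc : c.IsCycleOn Set.univ) (hσ : Commute σ c) :
    Nat.card (Cycles σ) * orderOf σ ≤ Nat.card X := by
  suffices hinj : Function.Injective
      fun a : Cycles σ × Fin (orderOf σ) => (σ ^ (a.2 : ℕ)) a.1.out by
    simpa only [Nat.card_prod, Nat.card_fin] using Nat.card_le_card_of_injective _ hinj
  rintro ⟨q, i⟩ ⟨r, j⟩ (h : (σ ^ (i : ℕ)) q.out = (σ ^ (j : ℕ)) r.out)
  obtain rfl : q = r := by
    have : σ.SameCycle q.out r.out := by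
      rw [← sameCycle_pow_left (n := (i : ℕ)), h, sameCycle_pow_left]
    exact Quotient.out_equiv_out.1 this
  have hij := eq_of_commute_of_isCycleOn_univ hc (hσ.pow_left i) (hσ.pow_left j) h
  exact Prod.ext rfl (Fin.ext (pow_injOn_Iio_orderOf i.2 j.2 hij))

lemma exists_transversal_of_le_card_cycles {f : Perm X} {b : ℕ} (hb : b ≤ Nat.card (Cycles f)) :
    ∃ W : Finset X, W.card = b ∧ ∀ x ∈ W, ∀ y ∈ W, f.SameCycle x y → x = y := by
  have := Fintype.ofFinite (Cycles f)
  rw [Nat.card_eq_fintype_card] at hb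
  obtain ⟨s, -, hs⟩ := Finset.exists_subset_card_eq hb
  refine ⟨s.map ⟨_, Quotient.out_injective⟩, by rw [Finset.card_map, hs], ?_⟩
  simp only [Finset.mem_map, Function.Embedding.coeFn_mk]
  rintro _ ⟨q, -, rfl⟩ _ ⟨r, -, rfl⟩ h
  exact congrArg _ (Quotient.out_equiv_out.1 h)

-- If `f v = f' w` with `v, w ∈ W`, then from this point on `f` and `f'` agree until the cycle of
-- `f` returns to `W`, which happens only at `v`; so `v` lies in the `f'`-cycle of `w`.
lemma eq_of_eqOn_compl_transversal {f f' : Perm X} {W : Set X}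
    (hW : ∀ x ∈ W, ∀ y ∈ W, f.SameCycle x y → x = y)
    (hW' : ∀ x ∈ W, ∀ y ∈ W, f'.SameCycle x y → x = y) (h : Set.EqOn f f' Wᶜ) : f = f' := by
  ext w
  by_cases hw : w ∉ W
  · exact h hw
  rw [not_not] at hw
  obtain ⟨v, hv⟩ := f.surjective (f' w)
  have hvW : v ∈ W := by
    by_contra hvW
    exact hvW (f'.injective ((h hvW).symm.trans hv) ▸ hw)
  suffices hwv : f'.SameCycle w v by rw [← hv, hW' w hw v hvW hwv]
  by_contra hwv
  have hS : Set.MapsTo f {x | f'.SameCycle w x ∧ f.SameCycle v x}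
      {x | f'.SameCycle w x ∧ f.SameCycle v x} := by
    rintro x ⟨hwx, hvx⟩
    have hxW : x ∉ W := fun hxW => hwv (hW v hvW x hxW hvx ▸ hwx)
    exact ⟨h hxW ▸ sameCycle_apply_right.2 hwx, sameCycle_apply_right.2 hvx⟩
  have hfv : f v ∈ {x | f'.SameCycle w x ∧ f.SameCycle v x} :=
    ⟨hv ▸ sameCycle_apply_right.2 .rfl, sameCycle_apply_right.2 .rfl⟩
  exact hwv (mem_of_sameCycle_of_mapsTo hS hfv (sameCycle_apply_left.2 .rfl)).1

lemma card_perm_le_card_cycles_le (b : ℕ) :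
    Nat.card {f : Perm X // b ≤ Nat.card (Cycles f)} ≤
      (Nat.card X).choose b * Nat.card X ^ (Nat.card X - b) := by
  classical
  have := Fintype.ofFinite X
  choose W hWcard hW using fun f : {f : Perm X // b ≤ Nat.card (Cycles f)} =>
    exists_transversal_of_le_card_cycles f.2
  have hfiber (V : Finset X) (hV : V ∈ Finset.powersetCard b Finset.univ) :
      (Finset.univ.filter fun f => W f = V).card ≤ Fintype.card X ^ (Fintype.card X - b) := by
    calc _ ≤ Fintype.card ({y // y ∉ V} → X) := by
          refine Finset.card_le_card_of_injOn (fun f y => f.1 y) (by simp) ?_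
          intro f hf f' hf' hff'
          have hfV : W f = V := by simpa using hf
          have hfV' : W f' = V := by simpa using hf'
          exact Subtype.ext <| eq_of_eqOn_compl_transversal (W := V) (hfV ▸ hW f) (hfV' ▸ hW f')
            fun x hx => congrFun hff' ⟨x, hx⟩
      _ = Fintype.card X ^ (Fintype.card X - b) := by
          rw [Fintype.card_fun, Fintype.card_subtype_compl, Fintype.card_coe,
            (Finset.mem_powersetCard.1 hV).2]
  have h := Finset.card_le_mul_card_image_of_maps_to (f := W) (s := Finset.univ)
    (fun f _ => Finset.mem_powersetCard.2 ⟨Finset.subset_univ _, hWcard f⟩) _ hfiber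
  rwa [Finset.card_powersetCard, Finset.card_univ, Finset.card_univ, mul_comm,
    ← Nat.card_eq_fintype_card, ← Nat.card_eq_fintype_card] at h

lemma card_perm_pow_eq_one_le {e : ℕ} (he : 0 < e) :
    Nat.card {f : Perm X // f ^ e = 1} ≤
      2 ^ Nat.card X * Nat.card X ^ (Nat.card X - Nat.card X ⌈/⌉ e) := by
  have hcycles (f : Perm X) (hf : f ^ e = 1) : Nat.card X ⌈/⌉ e ≤ Nat.card (Cycles f) := by
    rw [ceilDiv_le_iff_le_mul he, mul_comm]
    exact (card_le_card_cycles_mul_orderOf f).trans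
      (Nat.mul_le_mul_left _ (orderOf_le_of_pow_eq_one he hf))
  calc Nat.card {f : Perm X // f ^ e = 1}
      ≤ Nat.card {f : Perm X // Nat.card X ⌈/⌉ e ≤ Nat.card (Cycles f)} :=
        Nat.card_le_card_of_injective _ (Subtype.impEmbedding _ _ hcycles).injective
    _ ≤ _ := (card_perm_le_card_cycles_le _).trans
        (Nat.mul_le_mul_right _ (Nat.choose_le_two_pow _ _))

-- A permutation commuting with `p` is determined by its action on the cycles of `p` and, for each
-- cycle, the position of the image of the chosen representative.
lemma card_commute_pow_eq_one_le_mul (p : Perm X) (e : ℕ) :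
    Nat.card {τ : Perm X // Commute τ p ∧ τ ^ e = 1} ≤
      Nat.card {f : Perm (Cycles p) // f ^ e = 1} * orderOf p ^ Nat.card (Cycles p) := by
  let toCentralizer (τ : {τ : Perm X // Commute τ p ∧ τ ^ e = 1}) : centralizer {p} :=
    ⟨τ, mem_centralizer_singleton_iff.2 τ.2.1⟩
  choose s hs using fun (τ : {τ : Perm X // Commute τ p ∧ τ ^ e = 1}) (q : Cycles p) =>
    exists_pow_out_eq p (τ.1 q.out)
  have hbar (τ : {τ : Perm X // Commute τ p ∧ τ ^ e = 1}) (q : Cycles p) :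
      centralizerToPermCycles p (toCentralizer τ) q = ⟦τ.1 q.out⟧ := by
    conv_lhs => rw [← Quotient.out_eq q]
    rfl
  let Φ (τ : {τ : Perm X // Commute τ p ∧ τ ^ e = 1}) :
      {f : Perm (Cycles p) // f ^ e = 1} × (Cycles p → Fin (orderOf p)) :=
    (⟨centralizerToPermCycles p (toCentralizer τ), by
      rw [← map_pow, show toCentralizer τ ^ e = 1 from Subtype.ext τ.2.2, map_one]⟩, s τ)
  have hΦ : Function.Injective Φ := by
    intro τ τ' h
    obtain ⟨hcycles, hs_eq⟩ : centralizerToPermCycles p (toCentralizer τ) =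
        centralizerToPermCycles p (toCentralizer τ') ∧ s τ = s τ' := by
      simpa only [Φ, Prod.ext_iff, Subtype.ext_iff] using h
    have hout (q : Cycles p) : τ.1 q.out = τ'.1 q.out := by
      rw [← hs τ, ← hs τ', ← hbar, ← hbar, hcycles, hs_eq]
    ext x
    obtain ⟨i, hi⟩ := exists_pow_out_eq p x
    rw [← hi, ← mul_apply, ← mul_apply, (τ.2.1.pow_right i).eq, (τ'.2.1.pow_right i).eq,
      mul_apply, mul_apply, hout]
  simpa [Nat.card_prod, Nat.card_fun] using Nat.card_le_card_of_injective Φ hΦ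

lemma card_commute_pow_eq_one_le (p : Perm X) {e : ℕ} (he : 0 < e) :
    Nat.card {τ : Perm X // Commute τ p ∧ τ ^ e = 1} ≤ (2 * orderOf p) ^ Nat.card (Cycles p) *
      Nat.card (Cycles p) ^ (Nat.card (Cycles p) - Nat.card (Cycles p) ⌈/⌉ e) := by
  refine (card_commute_pow_eq_one_le_mul p e).trans
    ((Nat.mul_le_mul_right _ (card_perm_pow_eq_one_le he)).trans_eq ?_)
  rw [mul_pow, mul_right_comm]

end Cycles

section Symmetric

open Equiv Equiv.Perm

variable {V F X : Type*} {e : V × F ≃ X} {t : Perm F}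

lemma blockPerm_const_sameCycle_iff {v w : V} {i j : F} :
    (blockPerm e fun _ => t).SameCycle (e (v, i)) (e (w, j)) ↔ v = w ∧ t.SameCycle i j := by
  simp only [SameCycle, ← map_zpow, blockPerm_apply, e.apply_eq_iff_eq, Prod.mk.injEq,
    exists_and_left, Pi.pow_apply]

lemma card_cycles_blockPerm_const [Nonempty F] (ht : t.IsCycleOn Set.univ) :
    Nat.card (Cycles (blockPerm e fun _ => t)) = Nat.card V := by
  obtain ⟨i⟩ := ‹Nonempty F›
  refine (Nat.card_eq_of_bijective (fun v => (⟦e (v, i)⟧ : Cycles _)) ⟨fun v w h => ?_, ?_⟩).symm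
  · exact (blockPerm_const_sameCycle_iff.1 (Quotient.exact h)).1
  · intro q
    obtain ⟨x, rfl⟩ := Quotient.exists_rep q
    obtain ⟨⟨v, j⟩, rfl⟩ := e.surjective x
    exact ⟨v, Quotient.sound
      (blockPerm_const_sameCycle_iff.2 ⟨rfl, isCycleOn_univ_iff.1 ht i j⟩)⟩

lemma card_subtype_exists_le {ι α : Type*} [Finite ι] [Finite α] {R : ι → α → Prop} {b : ℕ}
    (hb : ∀ i, Nat.card {x // R i x} ≤ b) : Nat.card {x // ∃ i, R i x} ≤ Nat.card ι * b := by
  have := Fintype.ofFinite ι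
  calc Nat.card {x // ∃ i, R i x} ≤ Nat.card (Σ i, {x // R i x}) :=
        Nat.card_le_card_of_surjective (fun a => ⟨a.2.1, a.1, a.2.2⟩)
          fun ⟨x, i, hx⟩ => ⟨⟨i, x, hx⟩, rfl⟩
    _ ≤ Nat.card ι * b := by
        rw [Nat.card_sigma, Nat.card_eq_fintype_card, ← smul_eq_mul, ← Finset.card_univ]
        exact Finset.sum_le_card_nsmul _ _ _ fun i _ => hb i

variable {N d : ℕ}

lemma card_cycles_rho (N : ℕ) : Nat.card (Cycles (rho N)) = N := by
  have h : (finRotate 3).IsCycleOn Set.univ := isCycleOn_univ_iff.2 (by decide)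
  rw [rho_eq_blockPerm, card_cycles_blockPerm_const h, Nat.card_fin]

lemma orderOf_rho_le (N : ℕ) : orderOf (rho N) ≤ 3 := by
  refine orderOf_le_of_pow_eq_one three_pos ?_
  rw [rho_eq_blockPerm, ← map_pow, Pi.pow_def, finRotate_three_pow_three]
  exact map_one _

lemma card_commute_rho_pow_eq_one_le (N : ℕ) (hd : 0 < d) :
    Nat.card {σ : Perm (Fin (3 * N)) // Commute σ (rho N) ∧ σ ^ d = 1} ≤
      6 ^ N * (3 * N) ^ (N - N ⌈/⌉ d) := by
  have h := card_commute_pow_eq_one_le (rho N) hd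
  rw [card_cycles_rho] at h
  exact h.trans (Nat.mul_le_mul (Nat.pow_le_pow_left (Nat.mul_le_mul_left 2 (orderOf_rho_le N)) _)
    (Nat.pow_le_pow_left (Nat.le_mul_of_pos_left N three_pos) _))

lemma card_commute_sq_eq_one_le (hN : 0 < N) {σ : Perm (Fin (3 * N))}
    (hσ : Nat.card (Cycles σ) * orderOf σ ≤ 3 * N) :
    Nat.card {ω : Perm (Fin (3 * N)) // Commute ω σ ∧ ω ^ 2 = 1} ≤
      8 ^ N * (3 * N) ^ (3 * N / orderOf σ / 2) := by
  have h := card_commute_pow_eq_one_le σ two_pos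
  set m := Nat.card (Cycles σ)
  have hm : m ≤ 3 * N / orderOf σ := (Nat.le_div_iff_mul_le (orderOf_pos σ)).2 hσ
  have hm' : m ≤ 3 * N := hm.trans (Nat.div_le_self _ _)
  refine h.trans (Nat.mul_le_mul ?_ ?_)
  · calc (2 * orderOf σ) ^ m ≤ (2 ^ orderOf σ) ^ m := by
          obtain ⟨k, hk⟩ := Nat.exists_eq_succ_of_ne_zero (orderOf_pos σ).ne'
          rw [hk, Nat.succ_eq_add_one, pow_succ']
          exact Nat.pow_le_pow_left (Nat.mul_le_mul_left 2 Nat.lt_two_pow_self) m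
      _ ≤ 2 ^ (3 * N) := by
          rw [← pow_mul, mul_comm]
          exact Nat.pow_le_pow_right two_pos hσ
      _ = 8 ^ N := pow_mul 2 3 N
  · calc m ^ (m - m ⌈/⌉ 2) ≤ (3 * N) ^ (m - m ⌈/⌉ 2) := Nat.pow_le_pow_left hm' _
      _ ≤ (3 * N) ^ (3 * N / orderOf σ / 2) := by
          refine Nat.pow_le_pow_right (by omega) ?_
          rw [Nat.ceilDiv_eq_add_pred_div]
          omega

lemma sub_ceilDiv_add_le (hd : 2 ≤ d) : N - N ⌈/⌉ d + 3 * N / d / 2 ≤ 5 * N / 4 := by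
  have hceil : N ≤ d * (N ⌈/⌉ d) := le_smul_ceilDiv (show 0 < d by omega)
  have hceil3 : 3 * N / d ≤ 3 * (N ⌈/⌉ d) :=
    (Nat.div_le_div_right (by linarith : 3 * N ≤ 3 * (N ⌈/⌉ d) * d)).trans_eq
      (Nat.mul_div_cancel _ (by omega))
  have hhalf : 3 * N / d ≤ 3 * N / 2 := Nat.div_le_div_left hd two_pos
  omega

/-- The permutations of order `d` that commute with `ρ` and have at most `3 * N / d` cycles. Every
symmetry of order `d` of a one-orbit matching is of this kind. -/
abbrev RhoSymmetry (N d : ℕ) : Type :=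
  {σ : Perm (Fin (3 * N)) //
    Commute σ (rho N) ∧ orderOf σ = d ∧ Nat.card (Cycles σ) * orderOf σ ≤ 3 * N}

lemma card_rhoSymmetry_le (N : ℕ) (hd : 0 < d) :
    Nat.card (RhoSymmetry N d) ≤ 6 ^ N * (3 * N) ^ (N - N ⌈/⌉ d) :=
  (Nat.card_le_card_of_injective _ (Subtype.impEmbedding _ _ fun σ h =>
    ⟨h.1, h.2.1 ▸ pow_orderOf_eq_one σ⟩).injective).trans (card_commute_rho_pow_eq_one_le N hd)

lemma card_exists_commute_rhoSymmetry_le (hN : 0 < N) (hd : 2 ≤ d) :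
    Nat.card {ω : Perm (Fin (3 * N)) // ∃ σ : RhoSymmetry N d, Commute ω σ ∧ ω ^ 2 = 1} ≤
      48 ^ N * (3 * N) ^ (5 * N / 4) := by
  have hω (σ : RhoSymmetry N d) : Nat.card {ω : Perm (Fin (3 * N)) // Commute ω σ ∧ ω ^ 2 = 1} ≤
      8 ^ N * (3 * N) ^ (3 * N / d / 2) :=
    (card_commute_sq_eq_one_le hN σ.2.2.2).trans_eq (by rw [σ.2.2.1])
  calc _ ≤ 6 ^ N * (3 * N) ^ (N - N ⌈/⌉ d) * (8 ^ N * (3 * N) ^ (3 * N / d / 2)) :=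
        (card_subtype_exists_le hω).trans
          (Nat.mul_le_mul_right _ (card_rhoSymmetry_le N (zero_lt_two.trans_le hd)))
    _ = 48 ^ N * (3 * N) ^ (N - N ⌈/⌉ d + 3 * N / d / 2) := by
        rw [mul_mul_mul_comm, ← mul_pow, ← pow_add]; rfl
    _ ≤ 48 ^ N * (3 * N) ^ (5 * N / 4) :=
        Nat.mul_le_mul_left _ (Nat.pow_le_pow_right (by omega) (sub_ceilDiv_add_le hd))

/-- The matching `ω` has a nontrivial automorphism. -/
def HasSymmetry (ω : Omega N) : Prop :=
  ∃ σ : Perm (Fin (3 * N)), σ ≠ 1 ∧ σ * rho N = rho N * σ ∧ σ * ω.val * σ⁻¹ = ω.val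

lemma exists_rhoSymmetry_commute (hN : 0 < N) {ω : Omega N} (hω : OneOrbit ω)
    (hsymm : HasSymmetry ω) :
    ∃ d : Finset.Icc 2 (3 * N), ∃ σ : RhoSymmetry N d, Commute ω.val σ ∧ ω.val ^ 2 = 1 := by
  obtain ⟨σ, hσ, hσρ, hσω⟩ := hsymm
  have hσω : Commute σ ω.val := mul_inv_eq_iff_eq_mul.1 hσω
  have hcycles := card_cycles_mul_orderOf_le (oneOrbit_iff.1 hω) (hσω.mul_right hσρ)
  rw [Nat.card_fin] at hcycles
  have : Nonempty (Cycles σ) := ⟨⟦⟨0, by omega⟩⟧⟩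
  have hle : orderOf σ ≤ 3 * N := (Nat.le_mul_of_pos_left _ Nat.card_pos).trans hcycles
  have hge : 2 ≤ orderOf σ :=
    (Nat.two_le_iff _).2 ⟨(orderOf_pos σ).ne', mt orderOf_eq_one_iff.1 hσ⟩
  exact ⟨⟨orderOf σ, Finset.mem_Icc.2 ⟨hge, hle⟩⟩, ⟨σ, hσρ, rfl, hcycles⟩, hσω.symm,
    Perm.ext fun x => (ω.2 x).1⟩

lemma card_oneOrbit_hasSymmetry_le (hN : 0 < N) :
    Nat.card {ω : Omega N // OneOrbit ω ∧ HasSymmetry ω} ≤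
      3 * N * (48 ^ N * (3 * N) ^ (5 * N / 4)) := by
  calc _ ≤ Nat.card {ω : Perm (Fin (3 * N)) // ∃ d : Finset.Icc 2 (3 * N),
          ∃ σ : RhoSymmetry N d, Commute ω σ ∧ ω ^ 2 = 1} :=
        Nat.card_le_card_of_injective
          (fun ω => ⟨ω.1.1, exists_rhoSymmetry_commute hN ω.2.1 ω.2.2⟩) fun _ _ h =>
            Subtype.ext (Subtype.ext (congrArg (fun ω => ω.1) h))
    _ ≤ Nat.card (Finset.Icc 2 (3 * N)) * (48 ^ N * (3 * N) ^ (5 * N / 4)) :=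
        card_subtype_exists_le fun d =>
          card_exists_commute_rhoSymmetry_le hN (Finset.mem_Icc.1 d.2).1
    _ ≤ 3 * N * (48 ^ N * (3 * N) ^ (5 * N / 4)) := by
        refine Nat.mul_le_mul_right _ ?_
        rw [Nat.card_eq_fintype_card, Fintype.card_coe, Nat.card_Icc]
        omega

end Symmetric

section Asymptotics

open scoped Nat

lemma pow_self_le_three_pow_mul_factorial (n : ℕ) : n ^ n ≤ 3 ^ n * n ! := by
  have h := pow_div_factorial_le_exp (x := n) n.cast_nonneg n
  rw [div_le_iff₀ (by positivity), ← exp_one_pow] at h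
  have : (n : ℝ) ^ n ≤ 3 ^ n * n ! :=
    h.trans (by gcongr; exact exp_one_lt_d9.le.trans (by norm_num))
  exact_mod_cast this

lemma tendsto_div_of_mul_pow_self_le {a b : ℕ → ℕ} {C k K : ℕ}
    (h : ∀ᶠ n in atTop, b n * n ^ n ≤ a n * (C * n ^ k * K ^ n)) :
    Tendsto (fun n => (b n : ℝ) / a n) atTop (𝓝 0) := by
  have hlim : Tendsto (fun n : ℕ => C * ((n : ℝ) ^ k * (1 / 2 : ℝ) ^ n)) atTop (𝓝 0) := by
    simpa only [mul_zero] using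
      (tendsto_pow_const_mul_const_pow_of_abs_lt_one k (by norm_num [abs_of_pos])).const_mul (C : ℝ)
  refine squeeze_zero' (.of_forall fun n => by positivity) ?_ hlim
  filter_upwards [h, eventually_ge_atTop (2 * K), eventually_gt_atTop 0] with n hn hK hpos
  have hKn : (K : ℝ) ^ n ≤ (1 / 2) ^ n * n ^ n := by
    rw [← mul_pow]
    have : (2 * K : ℝ) ≤ n := by exact_mod_cast hK
    exact pow_le_pow_left₀ (by positivity) (by linarith) n
  refine div_le_of_le_mul₀ (by positivity) (by positivity) ?_
  refine le_of_mul_le_mul_right ?_ (show (0 : ℝ) < n ^ n by positivity)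
  calc (b n : ℝ) * n ^ n ≤ a n * (C * n ^ k * K ^ n) := by exact_mod_cast hn
    _ ≤ a n * (C * n ^ k * ((1 / 2) ^ n * n ^ n)) := by gcongr
    _ = C * (n ^ k * (1 / 2) ^ n) * a n * n ^ n := by ring

variable {g : ℕ}

lemma pow_le_card_oneOrbit_mul (hg : 0 < g) :
    g ^ (6 * g) ≤
      Nat.card {ω : Omega (4 * g - 2) // OneOrbit ω} * (108 * g ^ 3 * 6 ^ (4 * g)) := by
  have hcard := factorial_mul_factorial_le_card_oneOrbit
    (show 3 * (4 * g - 2) = 4 * (3 * g - 2) + 2 by omega)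
  rw [show 3 * g - 2 + 2 = 3 * g by omega] at hcard
  have hpow : g ^ (3 * g) ≤ (3 * g)! := by
    have h := pow_self_le_three_pow_mul_factorial (3 * g)
    rw [mul_pow] at h
    exact Nat.le_of_mul_le_mul_left h (by positivity)
  have hfactorial : (3 * g)! ≤ 9 * g ^ 2 * (3 * g - 2)! := by
    calc (3 * g)! = (3 * g - 2)! * (3 * g).descFactorial 2 :=
          (Nat.factorial_mul_descFactorial (by omega)).symm
      _ ≤ (3 * g - 2)! * (3 * g) ^ 2 := Nat.mul_le_mul_left _ (Nat.descFactorial_le_pow _ _)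
      _ = 9 * g ^ 2 * (3 * g - 2)! := by ring
  calc g ^ (6 * g) = g ^ (3 * g) * g ^ (3 * g) := by ring
    _ ≤ (3 * g)! * (9 * g ^ 2 * (3 * g - 2)!) := Nat.mul_le_mul hpow (hpow.trans hfactorial)
    _ = 9 * g ^ 2 * ((3 * g)! * (3 * g - 2)!) := by ring
    _ ≤ 9 * g ^ 2 * (Nat.card {ω : Omega (4 * g - 2) // OneOrbit ω} * (12 * g * 6 ^ (4 * g))) := by
        have hbase : 3 * (4 * g - 2) ≤ 12 * g := by omega
        refine Nat.mul_le_mul_left _ (hcard.trans ?_)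
        gcongr <;> omega
    _ = _ := by ring

lemma card_oneOrbit_hasSymmetry_le_mul_pow (hg : 0 < g) :
    Nat.card {ω : Omega (4 * g - 2) // OneOrbit ω ∧ HasSymmetry ω} ≤
      12 * g * (48 ^ (4 * g) * (12 * g) ^ (5 * g)) := by
  refine (card_oneOrbit_hasSymmetry_le (by omega)).trans ?_
  have hbase : 3 * (4 * g - 2) ≤ 12 * g := by omega
  gcongr <;> omega

end Asymptotics

/-- Theorem: asymptotically almost surely, a one-vertex triangulation has no nontrivial
automorphism: as `g → ∞`, with `N = 4g - 2`, the proportion of one-orbit configurations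
`ω ∈ Ω_N` fixed by conjugation by some nontrivial permutation commuting with `ρ`
tends to `0`. -/
theorem one_vertex_triangulations_asymmetric :
    Tendsto
      (fun g : ℕ =>
        (Nat.card {ω : Omega (4 * g - 2) // OneOrbit ω ∧
            ∃ σ : Equiv.Perm (Fin (3 * (4 * g - 2))), σ ≠ 1 ∧
              σ * rho (4 * g - 2) = rho (4 * g - 2) * σ ∧
              σ * ω.val * σ⁻¹ = ω.val} : ℝ) /
          (Nat.card {ω : Omega (4 * g - 2) // OneOrbit ω} : ℝ))
      atTop (𝓝 0) := by
  refine tendsto_div_of_mul_pow_self_le (C := 1296) (k := 4) (K := 48 ^ 4 * 6 ^ 4 * 12 ^ 5) ?_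
  filter_upwards [eventually_gt_atTop 0] with g hg
  have hA := pow_le_card_oneOrbit_mul hg
  have hB := card_oneOrbit_hasSymmetry_le_mul_pow hg
  set A := Nat.card {ω : Omega (4 * g - 2) // OneOrbit ω}
  calc _ ≤ 12 * g * (48 ^ (4 * g) * (12 * g) ^ (5 * g)) * g ^ g := Nat.mul_le_mul_right _ hB
    _ = 12 * g * 48 ^ (4 * g) * 12 ^ (5 * g) * g ^ (6 * g) := by ring
    _ ≤ 12 * g * 48 ^ (4 * g) * 12 ^ (5 * g) * (A * (108 * g ^ 3 * 6 ^ (4 * g))) :=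
        Nat.mul_le_mul_left _ hA
    _ = A * (1296 * g ^ 4 * (48 ^ 4 * 6 ^ 4 * 12 ^ 5) ^ g) := by
        rw [mul_pow, mul_pow, ← pow_mul, ← pow_mul, ← pow_mul]
        ring
end
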